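/- arXiv:1505.08033 — 2 statements merged into one kernel-verified Lean document; each statement's English description precedes it below -/
import Mathlib

section
/- Let d ≥ 1 and let σ be a nonzero, T^{×d}-invariant, boundedly finite measure on X^d such that the system (X^d, σ, T^{×d}) is ergodic. Then there exists a partition of {1,…,d} into subsets I₁,…,I_r such that σ = σ^{I₁} ⊗ ⋯ ⊗ σ^{I_r}, where each σ^{I_j} is a diagonal measure on X^{I_j}. If moreover the system (X^d, σ, T^{×d}) is totally dissipative, then σ is a diagonal measure supported on a single T^{×d}-orbit. -/
open MeasureTheory Set
open scoped ENNReal NNReal Classical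

noncomputable section

/-- Heights of the towers of the infinite Chacon transformation
(tower `0` is `[0,1)` with a single level, so `chaconH 1 = 8`). -/
def chaconH : ℕ → ℕ
  | 0 => 1
  | n + 1 => 2 * (3 * chaconH n + 1)

/-- Left endpoint of level `k` of tower `n`.  At step `n+1`, tower `n` (which fills
`[0, hₙ·3⁻ⁿ)`) is cut into three subcolumns of equal width; one spacer is added above the
middle subcolumn and `3hₙ+1` spacers above the third one, the spacers being taken
successively as the leftmost intervals of length `3⁻⁽ⁿ⁺¹⁾` in the unused part of `ℝ₊`;
then the three subcolumns are stacked left under right. -/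
def chaconL : ℕ → ℕ → ℝ
  | 0, _ => 0
  | n + 1, k =>
      if k < chaconH n then chaconL n k
      else if k < 2 * chaconH n then chaconL n (k - chaconH n) + (3 : ℝ)⁻¹ ^ (n + 1)
      else if k = 2 * chaconH n then (chaconH n : ℝ) * (3 : ℝ)⁻¹ ^ n
      else if k ≤ 3 * chaconH n then
        chaconL n (k - 2 * chaconH n - 1) + 2 * (3 : ℝ)⁻¹ ^ (n + 1)
      else (chaconH n : ℝ) * (3 : ℝ)⁻¹ ^ n
        + ((k : ℝ) - 3 * (chaconH n : ℝ)) * (3 : ℝ)⁻¹ ^ (n + 1)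

/-- Level `k` of tower `n`: an interval of length `3⁻ⁿ`, closed to the left and open to
the right. -/
def chaconLevel (n k : ℕ) : Set ℝ := Ico (chaconL n k) (chaconL n k + (3 : ℝ)⁻¹ ^ n)

/-- The Chacon transformation on `ℝ`: each point of a non-top level of some tower is sent
to the point directly above it (the value does not depend on the choice of the tower). -/
def chaconT0 (x : ℝ) : ℝ :=
  if h : ∃ p : ℕ × ℕ, p.2 + 1 < chaconH p.1 ∧ x ∈ chaconLevel p.1 p.2 then
    x - chaconL h.choose.1 h.choose.2 + chaconL h.choose.1 (h.choose.2 + 1)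
  else x

/-- The inverse of the Chacon transformation on `ℝ`. -/
def chaconT0inv (x : ℝ) : ℝ :=
  if h : ∃ p : ℕ × ℕ, p.2 + 1 < chaconH p.1 ∧ x ∈ chaconLevel p.1 (p.2 + 1) then
    x - chaconL h.choose.1 (h.choose.2 + 1) + chaconL h.choose.1 h.choose.2
  else x

/-- The space `X = ℝ₊`. -/
abbrev ChaconX : Type := ↥(Set.Ici (0 : ℝ))

/-- The infinite Chacon transformation `T` on `X = ℝ₊`. -/
def chaconT (x : ChaconX) : ChaconX :=
  ⟨max 0 (chaconT0 (x : ℝ)), Set.mem_Ici.mpr (le_max_left 0 _)⟩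

/-- The inverse `T⁻¹` of the Chacon transformation on `X = ℝ₊`. -/
def chaconTinv (x : ChaconX) : ChaconX :=
  ⟨max 0 (chaconT0inv (x : ℝ)), Set.mem_Ici.mpr (le_max_left 0 _)⟩

/-- Integer powers `T^j` of the Chacon transformation. -/
def chaconTZ (j : ℤ) : ChaconX → ChaconX :=
  if 0 ≤ j then chaconT^[j.toNat] else chaconTinv^[(-j).toNat]

/-- Lebesgue measure `μ` on `X = ℝ₊`. -/
def chaconMu : Measure ChaconX := volume.comap Subtype.val

/-- `C n`: the bottom half of tower `n` (its lowest `hₙ/2` levels), as a subset of `X`. -/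
def chaconC (n : ℕ) : Set ChaconX :=
  {x | ∃ k, k < chaconH n / 2 ∧ (x : ℝ) ∈ chaconLevel n k}

/-- `tₙ x ∈ {1,2,3}`: the subcolumn of tower `n` containing `x`
(junk value `0` if `x` is not in tower `n`). -/
def chaconTn (n : ℕ) (x : ChaconX) : ℕ :=
  if h : ∃ k, k < chaconH n ∧ (x : ℝ) ∈ chaconLevel n k then
    1 + (⌊((x : ℝ) - chaconL n h.choose) * (3 : ℝ) ^ (n + 1)⌋).toNat
  else 0

/-- The Cartesian power `T^{×ι}` of the Chacon transformation, acting coordinatewise. -/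
def chaconTd (ι : Type) (x : ι → ChaconX) : ι → ChaconX := fun i => chaconT (x i)

/-- Integer powers `(T^{×ι})^j`, acting coordinatewise. -/
def chaconTdZ (ι : Type) (j : ℤ) (x : ι → ChaconX) : ι → ChaconX := fun i => chaconTZ j (x i)

/-- `Cₙ^ι ⊆ X^ι`. -/
def chaconCd (ι : Type) (n : ℕ) : Set (ι → ChaconX) := {x | ∀ i, x i ∈ chaconC n}

/-- An `n`-box: a Cartesian product of levels of `C n`. -/
def IsNBox (ι : Type) (n : ℕ) (B : Set (ι → ChaconX)) : Prop :=
  ∃ k : ι → ℕ, (∀ i, k i < chaconH n / 2) ∧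
    B = {x : ι → ChaconX | ∀ i, ((x i : ℝ)) ∈ chaconLevel n (k i)}

/-- An `n`-diagonal: a maximal finite family of `n`-boxes `B, T^{×d}B, …, (T^{×d})^ℓ B`,
regarded as the union of its boxes. -/
def IsNDiagonal (ι : Type) (n : ℕ) (D : Set (ι → ChaconX)) : Prop :=
  ∃ (B : Set (ι → ChaconX)) (ℓ : ℕ),
    (∀ j : ℕ, j ≤ ℓ → IsNBox ι n (chaconTdZ ι (j : ℤ) '' B)) ∧
    ¬ chaconTdZ ι (-1) '' B ⊆ chaconCd ι n ∧
    ¬ chaconTdZ ι ((ℓ : ℤ) + 1) '' B ⊆ chaconCd ι n ∧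
    D = ⋃ j ∈ Finset.range (ℓ + 1), chaconTdZ ι (j : ℤ) '' B

/-- A measure is boundedly finite if bounded (measurable) sets have finite measure. -/
def BoundedlyFinite {α : Type*} [MeasurableSpace α] [PseudoMetricSpace α]
    (σ : Measure α) : Prop :=
  ∀ A : Set α, MeasurableSet A → Bornology.IsBounded A → σ A < ⊤

/-- Diagonal measures on `X^ι`: boundedly finite, `T^{×ι}`-invariant measures which are,
for every large enough `n`, concentrated on a single `n`-diagonal inside `Cₙ^ι`. -/
def IsDiagonalMeasure (ι : Type) [Fintype ι] (σ : Measure (ι → ChaconX)) : Prop :=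
  BoundedlyFinite σ ∧ σ.map (chaconTd ι) = σ ∧
    ∃ n₀ : ℕ, 1 ≤ n₀ ∧ ∀ n, n₀ ≤ n →
      ∃ D : Set (ι → ChaconX), IsNDiagonal ι n D ∧ σ (chaconCd ι n \ D) = 0

/-- A wandering set for the `ℤ`-action `Uz`. -/
def ZWandering {α : Type*} (Uz : ℤ → α → α) (W : Set α) : Prop :=
  ∀ j k : ℤ, j ≠ k → Disjoint (Uz j '' W) (Uz k '' W)

/-- Conservativity: every measurable wandering set is null. -/
def ZConservative {α : Type*} [MeasurableSpace α] (σ : Measure α) (Uz : ℤ → α → α) : Prop :=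
  ∀ W : Set α, MeasurableSet W → ZWandering Uz W → σ W = 0

/-- Total dissipativity: mod `σ`, the space is the disjoint union of the iterates of a
wandering set. -/
def ZTotallyDissipative {α : Type*} [MeasurableSpace α] (σ : Measure α)
    (Uz : ℤ → α → α) : Prop :=
  ∃ W : Set α, MeasurableSet W ∧ ZWandering Uz W ∧ σ ((⋃ j : ℤ, Uz j '' W)ᶜ) = 0

/-- Ergodicity of a (not necessarily finite) invariant measure: every invariant
measurable set is null or conull. -/
def MeasErgodic {α : Type*} [MeasurableSpace α] (σ : Measure α) (U : α → α) : Prop :=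
  ∀ A : Set α, MeasurableSet A → U ⁻¹' A = A → σ A = 0 ∨ σ Aᶜ = 0

/-- `Icc a b` is an `n`-crossing for `x`: a maximal finite set of consecutive integers `j`
with `(T^{×ι})^j x ∈ Cₙ^ι`. -/
def IsCrossing (ι : Type) (n : ℕ) (x : ι → ChaconX) (a b : ℤ) : Prop :=
  a ≤ b ∧ (∀ j : ℤ, a ≤ j → j ≤ b → chaconTdZ ι j x ∈ chaconCd ι n) ∧
    chaconTdZ ι (a - 1) x ∉ chaconCd ι n ∧ chaconTdZ ι (b + 1) x ∉ chaconCd ι n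

/-- `n(x)`: the smallest `n ≥ 1` with `x ∈ Cₙ^ι`. -/
def chaconNOf (ι : Type) (x : ι → ChaconX) : ℕ :=
  if h : ∃ n : ℕ, 1 ≤ n ∧ x ∈ chaconCd ι n then Nat.find h else 0

/-- `B(τ)`: the points of `B` whose coordinate `i` lies in subcolumn `τ i` of tower `n`. -/
def chaconBoxTau (ι : Type) (n : ℕ) (B : Set (ι → ChaconX)) (τ : ι → ℕ) :
    Set (ι → ChaconX) :=
  {x ∈ B | ∀ i, chaconTn n (x i) = τ i}

/-- The transition from the `n`-diagonal `D` to the `(n+1)`-diagonal `D'` is the central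
one, i.e. `D' = D(1,…,1)`. -/
def CentralTransition (ι : Type) (n : ℕ) (D D' : Set (ι → ChaconX)) : Prop :=
  ∀ B : Set (ι → ChaconX), IsNBox ι n B → B ⊆ D →
    chaconBoxTau ι n B (fun _ => 1) ⊆ D'

/-- The `n`-diagonal containing a given set (junk value `∅` if there is none). -/
def diagOfBox (ι : Type) (n : ℕ) (B : Set (ι → ChaconX)) : Set (ι → ChaconX) :=
  if h : ∃ D, IsNDiagonal ι n D ∧ B ⊆ D then h.choose else ∅

/-- `D(τ)`: the `(n+1)`-diagonal containing `B(τ)` for an `n`-box `B ⊆ D`. -/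
def diagTau (ι : Type) (n : ℕ) (D : Set (ι → ChaconX)) (τ : ι → ℕ) : Set (ι → ChaconX) :=
  if h : ∃ B, IsNBox ι n B ∧ B ⊆ D then diagOfBox ι (n + 1) (chaconBoxTau ι n h.choose τ)
  else ∅

/-- A consistent family of diagonals `(Dₙ)_{n ≥ n₀}`. -/
def IsConsistentFamily (ι : Type) (n₀ : ℕ) (D : ℕ → Set (ι → ChaconX)) : Prop :=
  (∀ n, n₀ ≤ n → IsNDiagonal ι n (D n)) ∧
    (chaconCd ι (n₀ - 1) ∩ ⋂ n, ⋂ (_ : n₀ ≤ n), D n).Nonempty ∧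
    ∀ n, n₀ ≤ n → D (n + 1) ∩ chaconCd ι n ⊆ D n

/-- `x` is seen by the family of diagonals `(Dₙ)_{n ≥ n₀}`. -/
def SeenByFam (ι : Type) (n₀ : ℕ) (D : ℕ → Set (ι → ChaconX)) (x : ι → ChaconX) : Prop :=
  ∀ n, n₀ ≤ n → x ∉ chaconCd ι n ∨ x ∈ D n

/-- Graph joinings arising from powers of `T`:
`σ(A₁ × ⋯ × A_d) = α μ(T^{-k₁}A₁ ∩ ⋯ ∩ T^{-k_d}A_d)` for some `0 < α < ∞`. -/
def IsGraphJoining (ι : Type) [Fintype ι] (σ : Measure (ι → ChaconX)) : Prop :=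
  ∃ (α : ℝ≥0∞) (k : ι → ℤ), 0 < α ∧ α ≠ ⊤ ∧
    ∀ A : ι → Set ChaconX, (∀ i, MeasurableSet (A i)) →
      σ (Set.univ.pi A) = α * chaconMu (⋂ i, chaconTZ (k i) ⁻¹' A i)

/-- Ergodic components of `σ`: the nonzero boundedly finite `T^{×ι}`-invariant ergodic
measures, absolutely continuous with respect to `σ`, which appear in its ergodic
decomposition. -/
def IsErgodicComponent (ι : Type) [Fintype ι] (σ ρ : Measure (ι → ChaconX)) : Prop :=
  ρ ≠ 0 ∧ BoundedlyFinite ρ ∧ ρ.map (chaconTd ι) = ρ ∧ MeasErgodic ρ (chaconTd ι) ∧ ρ ≪ σ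

end

/-! The single spacer of tower `n` sits over its middle subcolumn, so the left and the middle
subcolumns are shifted onto the next one by `T ^ h_n` and `T ^ (h_n + 1)` respectively. Hence if the
coordinates of a point occupy exactly two adjacent subcolumns, a power of `T^{×d}` moves the
corresponding sub-box of an `n`-box to another sub-box, up to applying `T` on the set `E` of
coordinates in the middle subcolumn only.

If such transitions happen infinitely often on a set of positive measure, then for some `E` the
image `(T_E)_* σ` is not singular to `σ`, hence equals `c • σ` by ergodicity, and `c = 1` by
recurrence (Borel–Cantelli). Invariance under `T_E` and `T_{Eᶜ}` makes `σ` a product over `E` and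
`Eᶜ`, and one inducts on the number of coordinates. If instead the transitions almost surely cease,
the subcolumns of two points of a typical orbit determine one another, and `σ` is a diagonal
measure. A totally dissipative ergodic `σ` is carried by a single orbit of atoms of equal mass;
infinitely many transitions would bring this orbit back to some `C_n^d` infinitely often, making its
measure infinite. -/

noncomputable section

namespace Chacon

open Filter Function

/-! ### Combinatorics of the towers -/

theorem chaconH_succ (n : ℕ) : chaconH (n + 1) = 2 * (3 * chaconH n + 1) := rfl

theorem chaconH_pos : ∀ n, 0 < chaconH n
  | 0 => one_pos
  | n + 1 => by rw [chaconH_succ]; omega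

theorem chaconH_succ_half (n : ℕ) : chaconH (n + 1) / 2 = 3 * chaconH n + 1 :=
  Nat.mul_div_cancel_left _ two_pos

theorem chaconH_half_le (n : ℕ) : chaconH n / 2 ≤ chaconH n := Nat.div_le_self _ _

theorem six_pow_le_chaconH (n : ℕ) : 6 ^ n ≤ chaconH n := by
  induction n with
  | zero => exact le_rfl
  | succ n ih => rw [chaconH_succ, pow_succ]; omega

/-- The left endpoint of level `k` of tower `n`, in units of the width `3⁻ⁿ`. -/
def leftCode : ℕ → ℕ → ℕ
  | 0, _ => 0
  | n + 1, k =>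
      if k < chaconH n then 3 * leftCode n k
      else if k < 2 * chaconH n then 3 * leftCode n (k - chaconH n) + 1
      else if k = 2 * chaconH n then 3 * chaconH n
      else if k ≤ 3 * chaconH n then 3 * leftCode n (k - 2 * chaconH n - 1) + 2
      else k

theorem chaconL_eq (n k : ℕ) : chaconL n k = leftCode n k * (3 : ℝ)⁻¹ ^ n := by
  induction n generalizing k with
  | zero => simp [chaconL, leftCode]
  | succ n ih =>
    simp only [chaconL, leftCode]
    split_ifs <;> (try rw [ih]) <;> push_cast <;> rw [pow_succ] <;> ring

theorem chaconL_nonneg (n k : ℕ) : 0 ≤ chaconL n k := by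
  rw [chaconL_eq]; positivity

/-- The height in tower `n + 1` of the bottom of the `r`-th subcolumn (`r = 0, 1, 2`) of
tower `n`; values `r ≥ 3` behave like `r = 2`. -/
def colShift (n r : ℕ) : ℕ :=
  if r = 0 then 0 else if r = 1 then chaconH n else 2 * chaconH n + 1

@[simp] theorem colShift_zero (n : ℕ) : colShift n 0 = 0 := rfl

@[simp] theorem colShift_one (n : ℕ) : colShift n 1 = chaconH n := rfl

@[simp] theorem colShift_two (n : ℕ) : colShift n 2 = 2 * chaconH n + 1 := rfl

theorem colShift_le (n r : ℕ) : colShift n r ≤ 2 * chaconH n + 1 := by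
  unfold colShift; split_ifs <;> omega

theorem add_colShift_lt_half {n k : ℕ} (r : ℕ) (hk : k < chaconH n) :
    k + colShift n r < chaconH (n + 1) / 2 := by
  have := colShift_le n r
  rw [chaconH_succ_half]
  omega

theorem add_colShift_lt {n k : ℕ} (r : ℕ) (hk : k < chaconH n) :
    k + colShift n r < chaconH (n + 1) :=
  (add_colShift_lt_half r hk).trans_le (chaconH_half_le _)

theorem leftCode_add_colShift {n k r : ℕ} (hk : k < chaconH n) (hr : r < 3) :
    leftCode (n + 1) (k + colShift n r) = 3 * leftCode n k + r := by
  interval_cases r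
  · simp [leftCode, hk]
  · have h2 : k + chaconH n < 2 * chaconH n := by omega
    simp [leftCode, h2]
  · have h1 : ¬ k + (2 * chaconH n + 1) < chaconH n := by omega
    have h2 : ¬ k + (2 * chaconH n + 1) < 2 * chaconH n := by omega
    have h3 : ¬ k + (2 * chaconH n + 1) = 2 * chaconH n := by omega
    have h4 : k + (2 * chaconH n + 1) ≤ 3 * chaconH n := by omega
    have h5 : k + (2 * chaconH n + 1) - 2 * chaconH n - 1 = k := by omega
    simp [leftCode, h1, h2, h3, h4, h5]

theorem exists_eq_add_colShift_or_spacer (n k : ℕ) :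
    (∃ l r, l < chaconH n ∧ r < 3 ∧ k = l + colShift n r) ∨
      k = 2 * chaconH n ∧ leftCode (n + 1) k = 3 * chaconH n ∨
      3 * chaconH n < k ∧ leftCode (n + 1) k = k := by
  by_cases h1 : k < chaconH n
  · exact .inl ⟨k, 0, h1, by omega, rfl⟩
  by_cases h2 : k < 2 * chaconH n
  · exact .inl ⟨k - chaconH n, 1, by omega, by omega, by rw [colShift_one]; omega⟩
  by_cases h3 : k = 2 * chaconH n
  · refine .inr (.inl ⟨h3, ?_⟩)
    simp only [leftCode]
    rw [if_neg h1, if_neg h2, if_pos h3]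
  by_cases h4 : k ≤ 3 * chaconH n
  · exact .inl ⟨k - 2 * chaconH n - 1, 2, by omega, by omega, by rw [colShift_two]; omega⟩
  · refine .inr (.inr ⟨by omega, ?_⟩)
    simp only [leftCode]
    rw [if_neg h1, if_neg h2, if_neg h3, if_neg h4]

theorem leftCode_mapsTo (n : ℕ) : MapsTo (leftCode n) (Iio (chaconH n)) (Iio (chaconH n)) := by
  induction n with
  | zero => simp [MapsTo, leftCode, chaconH]
  | succ n ih =>
    intro k hk
    rcases exists_eq_add_colShift_or_spacer n k with ⟨l, r, hl, hr, rfl⟩ | ⟨-, h⟩ | ⟨-, h⟩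
    · have : leftCode n l < chaconH n := ih hl
      rw [mem_Iio, leftCode_add_colShift hl hr, chaconH_succ]
      omega
    · have := chaconH_pos n
      rw [mem_Iio, h, chaconH_succ]
      omega
    · rwa [h]

theorem leftCode_injOn (n : ℕ) : InjOn (leftCode n) (Iio (chaconH n)) := by
  induction n with
  | zero => simp [InjOn, chaconH]
  | succ n ih =>
    intro k hk l hl hkl
    have hlt := fun k => mem_Iio.mp ∘ @leftCode_mapsTo n k
    rcases exists_eq_add_colShift_or_spacer n k with ⟨k', r, hk', hr, rfl⟩ | hk | hk <;>
    rcases exists_eq_add_colShift_or_spacer n l with ⟨l', r', hl', hr', rfl⟩ | hl | hl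
    · rw [leftCode_add_colShift hk' hr, leftCode_add_colShift hl' hr'] at hkl
      obtain rfl : r = r' := by omega
      rw [ih hk' hl' (by omega)]
    all_goals grind [leftCode_add_colShift]

theorem exists_leftCode_eq {n q : ℕ} (hq : q < chaconH n) : ∃ k < chaconH n, leftCode n k = q :=
  (Finset.range (chaconH n)).surjOn_of_injOn_of_card_le (leftCode n)
    (by simpa using leftCode_mapsTo n) (by simpa using leftCode_injOn n) le_rfl
    (by simpa using hq) |>.imp fun _ h => by simpa using h

theorem leftCode_zero_right (n : ℕ) : leftCode n 0 = 0 := by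
  induction n with
  | zero => rfl
  | succ n ih => simpa [ih] using leftCode_add_colShift (r := 0) (chaconH_pos n) (by omega)

/-- The integer part of `x * 3ⁿ`; levels of tower `n` are the fibres of this map. -/
def triadicFloor (n : ℕ) (x : ChaconX) : ℕ := ⌊(x : ℝ) * 3 ^ n⌋₊

theorem triadicFloor_succ_div (n : ℕ) (x : ChaconX) :
    triadicFloor (n + 1) x / 3 = triadicFloor n x := by
  unfold triadicFloor
  rw [← Nat.floor_div_natCast]
  congr 1
  push_cast
  ring

theorem triadicFloor_div_pow {n m : ℕ} (hm : n ≤ m) (x : ChaconX) :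
    triadicFloor m x / 3 ^ (m - n) = triadicFloor n x := by
  induction m, hm using Nat.le_induction with
  | base => simp
  | succ m hm ih =>
    rw [Nat.sub_add_comm hm, pow_succ', ← Nat.div_div_eq_div_mul, triadicFloor_succ_div, ih]

theorem eventually_one_le_triadicFloor {x : ChaconX} (hx : x ≠ ⊥) :
    ∀ᶠ n in atTop, 1 ≤ triadicFloor n x := by
  have hx0 : (0 : ℝ) < x := bot_lt_iff_ne_bot.mpr hx
  have hlim := tendsto_pow_atTop_atTop_of_one_lt (by norm_num : (1 : ℝ) < 3)
  filter_upwards [hlim.eventually_ge_atTop (x : ℝ)⁻¹] with n hn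
  rwa [triadicFloor, Nat.one_le_floor_iff, mul_comm, ← inv_le_iff_one_le_mul₀ hx0]

/-- The subcolumn (`0`, `1` or `2`) of tower `n` containing `x`; junk outside tower `n`. -/
def column (n : ℕ) (x : ChaconX) : ℕ := triadicFloor (n + 1) x % 3

theorem column_lt (n : ℕ) (x : ChaconX) : column n x < 3 := Nat.mod_lt _ (by omega)

/-- Level `k` of tower `n`, as a subset of `X`. -/
def level (n k : ℕ) : Set ChaconX := Subtype.val ⁻¹' chaconLevel n k

theorem mem_level_iff {n k : ℕ} {x : ChaconX} :
    x ∈ level n k ↔ triadicFloor n x = leftCode n k := by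
  have hx : 0 ≤ (x : ℝ) * 3 ^ n := mul_nonneg x.2 (by positivity)
  have h3 : (0 : ℝ) < 3 ^ n := by positivity
  have hright : leftCode n k * (3 : ℝ)⁻¹ ^ n + (3 : ℝ)⁻¹ ^ n = (leftCode n k + 1) / 3 ^ n := by
    rw [inv_pow]; ring
  rw [level, mem_preimage, chaconLevel, mem_Ico, chaconL_eq, hright, triadicFloor,
    Nat.floor_eq_iff hx, inv_pow, ← div_eq_mul_inv, div_le_iff₀ h3, lt_div_iff₀ h3]

theorem level_unique {n k l : ℕ} {x : ChaconX} (hk : k < chaconH n) (hl : l < chaconH n)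
    (hxk : x ∈ level n k) (hxl : x ∈ level n l) : k = l :=
  leftCode_injOn n hk hl ((mem_level_iff.mp hxk).symm.trans (mem_level_iff.mp hxl))

theorem mem_level_succ_iff {n k r : ℕ} {x : ChaconX} (hk : k < chaconH n) (hr : r < 3) :
    x ∈ level (n + 1) (k + colShift n r) ↔ x ∈ level n k ∧ column n x = r := by
  rw [mem_level_iff, mem_level_iff, leftCode_add_colShift hk hr, ← triadicFloor_succ_div n, column]
  omega

theorem mem_level_succ {n k : ℕ} {x : ChaconX} (hk : k < chaconH n) (hx : x ∈ level n k) :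
    x ∈ level (n + 1) (k + colShift n (column n x)) :=
  (mem_level_succ_iff hk (column_lt n x)).mpr ⟨hx, rfl⟩

theorem mem_level_of_le {n m k l : ℕ} {x y : ChaconX} (hm : n ≤ m) (hx : x ∈ level m l)
    (hy : y ∈ level m l) (hxk : x ∈ level n k) : y ∈ level n k := by
  rw [mem_level_iff] at *
  rw [← triadicFloor_div_pow hm, hy, ← hx, triadicFloor_div_pow hm, hxk]

theorem exists_mem_level_of_lt {n : ℕ} {x : ChaconX} (hx : (x : ℝ) < 2 ^ n) :
    ∃ k < chaconH n, x ∈ level n k := by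
  have hlt : triadicFloor n x < chaconH n := by
    refine lt_of_lt_of_le ?_ (six_pow_le_chaconH n)
    rw [triadicFloor, Nat.floor_lt (mul_nonneg x.2 (by positivity))]
    calc (x : ℝ) * 3 ^ n < 2 ^ n * 3 ^ n := by gcongr
      _ = (6 ^ n : ℕ) := by rw [← mul_pow]; norm_num
  exact (exists_leftCode_eq hlt).imp fun k hk => ⟨hk.1, mem_level_iff.mpr hk.2.symm⟩

theorem exists_mem_level_half {n k m : ℕ} {x : ChaconX} (hk : k < chaconH n) (hx : x ∈ level n k)
    (hm : n < m) : ∃ l < chaconH m / 2, x ∈ level m l := by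
  induction m, hm using Nat.le_induction with
  | base => exact ⟨_, add_colShift_lt_half _ hk, mem_level_succ hk hx⟩
  | succ m _ ih =>
    obtain ⟨l, hl, hxl⟩ := ih
    have hl' := hl.trans_le (chaconH_half_le m)
    exact ⟨_, add_colShift_lt_half _ hl', mem_level_succ hl' hxl⟩

theorem eventually_exists_mem_level (x : ChaconX) (a : ℕ) :
    ∀ᶠ n in atTop, ∃ k, k + a < chaconH n / 2 ∧ x ∈ level n k := by
  induction a with
  | zero =>
    obtain ⟨n, hn⟩ := pow_unbounded_of_one_lt (x : ℝ) one_lt_two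
    obtain ⟨k, hk, hx⟩ := exists_mem_level_of_lt hn
    filter_upwards [eventually_gt_atTop n] with m hm using exists_mem_level_half hk hx hm
  | succ a ih =>
    rw [← map_add_atTop_eq_nat 1, eventually_map]
    filter_upwards [ih] with n ⟨k, hk, hx⟩
    have hk' : k < chaconH n := by omega
    refine ⟨_, ?_, mem_level_succ hk' hx⟩
    have := colShift_le n (column n x)
    rw [chaconH_succ_half]
    omega

theorem eventually_exists_mem_level_pos {x : ChaconX} (hx : x ≠ ⊥) :
    ∀ᶠ n in atTop, ∃ k, 1 ≤ k ∧ k < chaconH n / 2 ∧ x ∈ level n k := by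
  filter_upwards [eventually_exists_mem_level x 0, eventually_one_le_triadicFloor hx]
    with n ⟨k, hk, hxk⟩ hpos
  refine ⟨k, Nat.one_le_iff_ne_zero.mpr ?_, hk, hxk⟩
  rintro rfl
  rw [mem_level_iff.mp hxk, leftCode_zero_right] at hpos
  omega

theorem bot_mem_level (n : ℕ) : (⊥ : ChaconX) ∈ level n 0 := by
  rw [mem_level_iff, leftCode_zero_right, triadicFloor]
  exact Nat.floor_eq_zero.mpr (by rw [Set.Ici.coe_bot, zero_mul]; exact one_pos)

/-! ### The transformation -/

theorem sub_add_mem_chaconLevel {n k : ℕ} {x : ℝ} (hx : x ∈ chaconLevel n k) (l : ℕ) :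
    x - chaconL n k + chaconL n l ∈ chaconLevel n l := by
  unfold chaconLevel at *
  exact ⟨by linarith [hx.1], by linarith [hx.2]⟩

theorem chaconL_step_succ {n k r : ℕ} (hk : k + 1 < chaconH n) (hr : r < 3) :
    chaconL (n + 1) (k + colShift n r + 1) - chaconL (n + 1) (k + colShift n r) =
      chaconL n (k + 1) - chaconL n k := by
  rw [add_right_comm]
  simp only [chaconL_eq, leftCode_add_colShift (Nat.lt_of_succ_lt hk) hr,
    leftCode_add_colShift hk hr]
  push_cast
  ring

theorem exists_chaconL_step_eq {n k m : ℕ} {x : ChaconX} (hk : k + 1 < chaconH n)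
    (hx : x ∈ level n k) (hm : n ≤ m) :
    ∃ l, l + 1 < chaconH m ∧ x ∈ level m l ∧
      chaconL m (l + 1) - chaconL m l = chaconL n (k + 1) - chaconL n k := by
  induction m, hm using Nat.le_induction with
  | base => exact ⟨k, hk, hx, rfl⟩
  | succ m _ ih =>
    obtain ⟨l, hl, hxl, hstep⟩ := ih
    refine ⟨l + colShift m (column m x), ?_, mem_level_succ (by omega) hxl, ?_⟩
    · have := add_colShift_lt (column m x) hl
      omega
    · rw [chaconL_step_succ hl (column_lt m x), hstep]

theorem chaconL_step_eq {n k m l : ℕ} {x : ChaconX} (hk : k + 1 < chaconH n) (hxk : x ∈ level n k)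
    (hl : l + 1 < chaconH m) (hxl : x ∈ level m l) :
    chaconL m (l + 1) - chaconL m l = chaconL n (k + 1) - chaconL n k := by
  obtain ⟨a, ha, hxa, hka⟩ := exists_chaconL_step_eq hk hxk (le_max_left n m)
  obtain ⟨b, hb, hxb, hlb⟩ := exists_chaconL_step_eq hl hxl (le_max_right n m)
  obtain rfl : a = b := level_unique (by omega) (by omega) hxa hxb
  rw [← hka, ← hlb]

theorem chaconT0_eq {n k : ℕ} {x : ChaconX} (hk : k + 1 < chaconH n) (hx : x ∈ level n k) :
    chaconT0 x = x - chaconL n k + chaconL n (k + 1) := by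
  have hex : ∃ q : ℕ × ℕ, q.2 + 1 < chaconH q.1 ∧ (x : ℝ) ∈ chaconLevel q.1 q.2 :=
    ⟨(n, k), hk, hx⟩
  rw [chaconT0, dif_pos hex]
  linarith [chaconL_step_eq hk hx hex.choose_spec.1 hex.choose_spec.2]

theorem coe_chaconT {n k : ℕ} {x : ChaconX} (hk : k + 1 < chaconH n) (hx : x ∈ level n k) :
    (chaconT x : ℝ) = x - chaconL n k + chaconL n (k + 1) := by
  rw [← chaconT0_eq hk hx]
  refine max_eq_right ?_
  rw [chaconT0_eq hk hx]
  exact (chaconL_nonneg n (k + 1)).trans (sub_add_mem_chaconLevel hx (k + 1)).1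

theorem chaconT_mem_level {n k : ℕ} {x : ChaconX} (hk : k + 1 < chaconH n) (hx : x ∈ level n k) :
    chaconT x ∈ level n (k + 1) := by
  rw [level, mem_preimage, coe_chaconT hk hx]
  exact sub_add_mem_chaconLevel hx (k + 1)

theorem exists_chaconT_eq {n k : ℕ} {x : ChaconX} (hk : k + 1 < chaconH n)
    (hx : x ∈ level n (k + 1)) : ∃ z ∈ level n k, chaconT z = x := by
  have hmem := sub_add_mem_chaconLevel hx k
  refine ⟨⟨x - chaconL n (k + 1) + chaconL n k, (chaconL_nonneg n k).trans hmem.1⟩, hmem, ?_⟩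
  rw [Subtype.ext_iff, coe_chaconT hk hmem]
  ring

theorem chaconT_injective : Injective chaconT := by
  intro x y hxy
  obtain ⟨n, ⟨k, hk, hxk⟩, l, hl, hyl⟩ :=
    ((eventually_exists_mem_level x 1).and (eventually_exists_mem_level y 1)).exists
  have hk' : k + 1 < chaconH n := hk.trans_le (chaconH_half_le n)
  have hl' : l + 1 < chaconH n := hl.trans_le (chaconH_half_le n)
  have hmem := chaconT_mem_level hk' hxk
  rw [hxy] at hmem
  obtain rfl : k = l := by
    have := level_unique hk' hl' hmem (chaconT_mem_level hl' hyl)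
    omega
  have hx := coe_chaconT hk' hxk
  rw [hxy, coe_chaconT hl' hyl] at hx
  exact Subtype.ext (by linarith)

theorem chaconT_mem_level_iff {n k : ℕ} {x : ChaconX} (hk : k + 1 < chaconH n) :
    chaconT x ∈ level n (k + 1) ↔ x ∈ level n k := by
  refine ⟨fun hx => ?_, chaconT_mem_level hk⟩
  obtain ⟨z, hz, hzx⟩ := exists_chaconT_eq hk hx
  rwa [← chaconT_injective hzx]

theorem iterate_chaconT_mem_level_iff {n k j : ℕ} {x : ChaconX} (hk : k + j < chaconH n) :
    chaconT^[j] x ∈ level n (k + j) ↔ x ∈ level n k := by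
  induction j generalizing x k with
  | zero => rfl
  | succ j ih =>
    rw [iterate_succ_apply, ← add_assoc, add_right_comm, ih (by omega),
      chaconT_mem_level_iff (by omega)]

theorem exists_iterate_chaconT_eq {n k j : ℕ} {x : ChaconX} (hk : k + j < chaconH n)
    (hx : x ∈ level n (k + j)) : ∃ z ∈ level n k, chaconT^[j] z = x := by
  induction j generalizing x with
  | zero => exact ⟨x, hx, rfl⟩
  | succ j ih =>
    obtain ⟨y, hy, rfl⟩ := exists_chaconT_eq (k := k + j) hk hx
    obtain ⟨z, hz, rfl⟩ := ih (by omega) hy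
    exact ⟨z, hz, iterate_succ_apply' ..⟩

theorem iterate_chaconT_ne_self {j : ℕ} (hj : 0 < j) (x : ChaconX) : chaconT^[j] x ≠ x := by
  intro he
  obtain ⟨n, k, hk, hx⟩ := (eventually_exists_mem_level x j).exists
  have hk' : k + j < chaconH n := hk.trans_le (chaconH_half_le n)
  have hmem := (iterate_chaconT_mem_level_iff hk').mpr hx
  rw [he] at hmem
  have := level_unique (by omega) hk' hx hmem
  omega

theorem bot_notMem_level_succ {n k : ℕ} (hk : k + 1 < chaconH n) :
    (⊥ : ChaconX) ∉ level n (k + 1) := fun hmem =>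
  (Nat.succ_ne_zero k) (level_unique hk (chaconH_pos n) hmem (bot_mem_level n))

theorem chaconT_ne_bot (x : ChaconX) : chaconT x ≠ ⊥ := by
  intro he
  obtain ⟨n, k, hk, hx⟩ := (eventually_exists_mem_level x 1).exists
  have hk' : k + 1 < chaconH n := hk.trans_le (chaconH_half_le n)
  exact bot_notMem_level_succ hk' (he ▸ chaconT_mem_level hk' hx)

theorem range_chaconT : range chaconT = {⊥}ᶜ := by
  refine Subset.antisymm (range_subset_iff.mpr chaconT_ne_bot) fun x hx => ?_
  obtain ⟨n, k, hk1, hk, hxk⟩ := (eventually_exists_mem_level_pos hx).exists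
  obtain ⟨l, rfl⟩ := Nat.exists_eq_add_of_le' hk1
  obtain ⟨z, -, hz⟩ := exists_chaconT_eq (hk.trans_le (chaconH_half_le n)) hxk
  exact ⟨z, hz⟩

theorem chaconTinv_chaconT : LeftInverse chaconTinv chaconT := by
  intro x
  obtain ⟨n, k, hk, hx⟩ := (eventually_exists_mem_level x 1).exists
  have hk' : k + 1 < chaconH n := hk.trans_le (chaconH_half_le n)
  have hex : ∃ q : ℕ × ℕ, q.2 + 1 < chaconH q.1 ∧ (chaconT x : ℝ) ∈ chaconLevel q.1 (q.2 + 1) :=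
    ⟨(n, k), hk', chaconT_mem_level hk' hx⟩
  have hx' : x ∈ level _ _ :=
    (chaconT_mem_level_iff hex.choose_spec.1).mp hex.choose_spec.2
  have hinv : chaconT0inv (chaconT x) = x := by
    rw [chaconT0inv, dif_pos hex]
    linarith [coe_chaconT hex.choose_spec.1 hx']
  exact Subtype.ext ((congrArg (max 0) hinv).trans (max_eq_right x.2))

theorem chaconTinv_bot : chaconTinv ⊥ = ⊥ := by
  have hinv : chaconT0inv (⊥ : ChaconX) = (⊥ : ChaconX) := by
    rw [chaconT0inv, dif_neg]
    rintro ⟨⟨n, k⟩, hk, hx⟩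
    exact bot_notMem_level_succ hk hx
  exact Subtype.ext ((congrArg (max 0) hinv).trans (max_self 0))

/-! ### Measurability -/

theorem measurable_triadicFloor (n : ℕ) : Measurable (triadicFloor n) :=
  Nat.measurable_floor.comp (measurable_subtype_coe.mul_const _)

theorem measurableSet_level (n k : ℕ) : MeasurableSet (level n k) :=
  measurable_subtype_coe measurableSet_Ico

theorem measurable_chaconT : Measurable chaconT := by
  intro S hS
  let piece : ℕ × ℕ → Set ChaconX := fun q =>
    level q.1 q.2 ∩ (fun x : ChaconX => (x : ℝ) - chaconL q.1 q.2 + chaconL q.1 (q.2 + 1)) ⁻¹'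
      (Subtype.val '' S)
  have hpieces : chaconT ⁻¹' S = ⋃ q ∈ {q : ℕ × ℕ | q.2 + 1 < chaconH q.1}, piece q := by
    ext x
    simp only [piece, mem_preimage, mem_iUnion, mem_inter_iff, mem_ofPred_eq, exists_prop]
    constructor
    · intro hx
      obtain ⟨n, k, hk, hxk⟩ := (eventually_exists_mem_level x 1).exists
      have hk' : k + 1 < chaconH n := hk.trans_le (chaconH_half_le n)
      exact ⟨(n, k), hk', hxk, _, hx, coe_chaconT hk' hxk⟩
    · rintro ⟨q, hq, hxq, y, hy, hyx⟩
      rwa [Subtype.ext (hyx.trans (coe_chaconT hq hxq).symm)] at hy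
  rw [hpieces]
  refine MeasurableSet.biUnion (to_countable _) fun q _ => (measurableSet_level _ _).inter ?_
  exact ((measurable_subtype_coe.sub_const _).add_const _)
    (measurableSet_Ici.subtype_image hS)

instance : StandardBorelSpace ChaconX := measurableSet_Ici.standardBorel

/-! ### Invariant measures of measurable embeddings -/

section GrandOrbit

variable {α : Type*} {f : α → α} {S : Set α}

/-- The grand orbit of `S`: the points having a common image under iterates of `f` with some
point of `S`. For injective `f` it is the union of the full orbits of the points of `S`. -/
def grandOrbit (f : α → α) (S : Set α) : Set α := ⋃ (a : ℕ) (b : ℕ), f^[a] ⁻¹' (f^[b] '' S)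

theorem mem_grandOrbit {x : α} : x ∈ grandOrbit f S ↔ ∃ a b, ∃ y ∈ S, f^[b] y = f^[a] x := by
  simp only [grandOrbit, mem_iUnion, mem_preimage, mem_image]

theorem subset_grandOrbit : S ⊆ grandOrbit f S := fun x hx =>
  mem_grandOrbit.mpr ⟨0, 0, x, hx, rfl⟩

theorem preimage_grandOrbit : f ⁻¹' grandOrbit f S = grandOrbit f S := by
  ext x
  rw [mem_preimage, mem_grandOrbit, mem_grandOrbit]
  constructor
  · rintro ⟨a, b, y, hy, hxy⟩
    exact ⟨a + 1, b, y, hy, hxy⟩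
  · rintro ⟨a, b, y, hy, hxy⟩
    refine ⟨a, b + 1, y, hy, ?_⟩
    rw [← iterate_succ_apply, iterate_succ_apply', iterate_succ_apply', hxy]

end GrandOrbit

section MeasurableEmbedding

variable {α : Type*} [MeasurableSpace α] {f : α → α} {μ ν : Measure α}

theorem iterate_measurableEmbedding (hf : MeasurableEmbedding f) (n : ℕ) :
    MeasurableEmbedding f^[n] := by
  induction n with
  | zero => exact .id
  | succ n ih => exact ih.comp hf

theorem measurableSet_grandOrbit (hf : MeasurableEmbedding f) {S : Set α} (hS : MeasurableSet S) :
    MeasurableSet (grandOrbit f S) :=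
  .iUnion fun a => .iUnion fun b => (iterate_measurableEmbedding hf a).measurable
    ((iterate_measurableEmbedding hf b).measurableSet_image.mpr hS)

theorem measure_image_of_measurePreserving (hf : MeasurableEmbedding f)
    (hμ : MeasurePreserving f μ μ) (S : Set α) : μ (f '' S) = μ S := by
  rw [← hμ.measure_preimage_emb hf, preimage_image_eq _ hf.injective]

theorem measure_grandOrbit_eq_zero (hf : MeasurableEmbedding f) (hμ : MeasurePreserving f μ μ)
    {S : Set α} (hS : μ S = 0) : μ (grandOrbit f S) = 0 := by
  refine measure_iUnion_null fun a => measure_iUnion_null fun b => ?_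
  rw [(hμ.iterate a).measure_preimage_emb (iterate_measurableEmbedding hf a),
    measure_image_of_measurePreserving (iterate_measurableEmbedding hf b) (hμ.iterate b), hS]

theorem rnDeriv_comp_ae_eq (hf : MeasurableEmbedding f) [SigmaFinite μ] [SigmaFinite ν]
    (hν : MeasurePreserving f ν ν) (hμ : MeasurePreserving f μ μ) (hac : ν ≪ μ) :
    ν.rnDeriv μ ∘ f =ᵐ[μ] ν.rnDeriv μ := by
  set g := ν.rnDeriv μ
  have hg : Measurable g := ν.measurable_rnDeriv μ
  have hdens : μ.withDensity g = ν := Measure.withDensity_rnDeriv_eq ν μ hac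
  have hdens' : μ.withDensity (g ∘ f) = ν := by
    ext S hS
    calc μ.withDensity (g ∘ f) S = ∫⁻ x in f ⁻¹' (f '' S), g (f x) ∂μ := by
          rw [withDensity_apply _ hS, preimage_image_eq _ hf.injective]; rfl
      _ = ν (f '' S) := by
          rw [hμ.setLIntegral_comp_preimage_emb hf, ← withDensity_apply _
            (hf.measurableSet_image.mpr hS), hdens]
      _ = ν S := measure_image_of_measurePreserving hf hν S
  have : SigmaFinite (μ.withDensity (g ∘ f)) := hdens' ▸ inferInstance
  exact (withDensity_eq_iff_of_sigmaFinite (hg.comp hf.measurable).aemeasurable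
    hg.aemeasurable).mp (hdens'.trans hdens.symm)

theorem eq_smul_of_absolutelyContinuous (hf : MeasurableEmbedding f) [SigmaFinite μ]
    [SigmaFinite ν] (hν : MeasurePreserving f ν ν) (hμ : Ergodic f μ) (hac : ν ≪ μ) :
    ∃ c : ℝ≥0∞, ν = c • μ := by
  obtain ⟨c, hc⟩ := hμ.ae_eq_const_of_ae_eq_comp₀ (ν.measurable_rnDeriv μ).nullMeasurable
    (rnDeriv_comp_ae_eq hf hν hμ.toMeasurePreserving hac)
  refine ⟨c, ?_⟩
  rw [← Measure.withDensity_rnDeriv_eq ν μ hac, withDensity_congr_ae hc]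
  exact withDensity_const c

theorem mutuallySingular_or_eq_smul (hf : MeasurableEmbedding f) [SigmaFinite μ] [SigmaFinite ν]
    (hν : Ergodic f ν) (hμ : Ergodic f μ) : ν ⟂ₘ μ ∨ ∃ c : ℝ≥0∞, ν = c • μ := by
  obtain ⟨S, hS, hsing, hSμ⟩ := Measure.mutuallySingular_singularPart ν μ
  have horbit : MeasurableSet (grandOrbit f Sᶜ) := measurableSet_grandOrbit hf hS.compl
  have horbit_null : μ (grandOrbit f Sᶜ) = 0 :=
    measure_grandOrbit_eq_zero hf hμ.toMeasurePreserving hSμ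
  rcases hν.measure_self_or_compl_eq_zero horbit preimage_grandOrbit with hνS | hνS
  · refine .inr (eq_smul_of_absolutelyContinuous hf hν.toMeasurePreserving hμ ?_)
    have hpart : ν.singularPart μ = 0 := by
      rw [← Measure.measure_univ_eq_zero, ← union_compl_self S]
      exact measure_union_null hsing ((Measure.singularPart_le ν μ).absolutelyContinuous
        (measure_mono_null subset_grandOrbit hνS))
    rwa [Measure.singularPart_eq_zero] at hpart
  · exact .inl ⟨(grandOrbit f Sᶜ)ᶜ, horbit.compl, hνS, by rwa [compl_compl]⟩

end MeasurableEmbedding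

/-! ### Boxes in the Cartesian power -/

section Box

variable {ι : Type} {n : ℕ} {k : ι → ℕ} {E : Set ι}

/-- The product of the levels `k i` of tower `n`. -/
def box (n : ℕ) (k : ι → ℕ) : Set (ι → ChaconX) := univ.pi fun i => level n (k i)

/-- The Chacon transformation acting only on the coordinates in `E`. -/
def partialT (E : Set ι) (x : ι → ChaconX) : ι → ChaconX :=
  fun i => if i ∈ E then chaconT (x i) else x i

theorem mem_box {x : ι → ChaconX} : x ∈ box n k ↔ ∀ i, x i ∈ level n (k i) := by
  rw [box, mem_univ_pi]

theorem partialT_univ : partialT univ = chaconTd ι := by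
  funext x i
  rw [partialT, if_pos (mem_univ i), chaconTd]

theorem partialT_partialT_compl (E : Set ι) (x : ι → ChaconX) :
    partialT E (partialT Eᶜ x) = chaconTd ι x := by
  funext i
  by_cases hi : i ∈ E <;> simp [partialT, chaconTd, hi]

theorem semiconj_partialT_chaconTd (E : Set ι) :
    Semiconj (partialT E) (chaconTd ι) (chaconTd ι) := by
  intro x
  funext i
  by_cases hi : i ∈ E <;> simp [partialT, chaconTd, hi]

theorem iterate_partialT (E : Set ι) (j : ℕ) (x : ι → ChaconX) (i : ι) :
    (partialT E)^[j] x i = if i ∈ E then chaconT^[j] (x i) else x i := by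
  induction j generalizing x with
  | zero => simp
  | succ j ih =>
    rw [iterate_succ_apply, ih, iterate_succ_apply, partialT]
    split_ifs <;> rfl

theorem iterate_chaconTd (j : ℕ) (x : ι → ChaconX) (i : ι) :
    (chaconTd ι)^[j] x i = chaconT^[j] (x i) := by
  rw [← partialT_univ, iterate_partialT, if_pos (mem_univ i)]

theorem partialT_injective (E : Set ι) : Injective (partialT E) := by
  intro x y hxy
  funext i
  have hi := congrFun hxy i
  unfold partialT at hi
  split_ifs at hi
  exacts [chaconT_injective hi, hi]

theorem iterate_chaconTd_preimage_box {a : ℕ} (hk : ∀ i, k i + a < chaconH n) :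
    (chaconTd ι)^[a] ⁻¹' box n (fun i => k i + a) = box n k := by
  ext x
  simp only [mem_preimage, mem_box, iterate_chaconTd]
  exact forall_congr' fun i => iterate_chaconT_mem_level_iff (hk i)

theorem partialT_preimage_box {q : ι → ℕ} (hk : ∀ i, k i < chaconH n)
    (hkq : ∀ i, k i = if i ∈ E then q i + 1 else q i) : partialT E ⁻¹' box n k = box n q := by
  ext x
  simp only [mem_preimage, mem_box]
  refine forall_congr' fun i => ?_
  have hki := hk i
  unfold partialT
  rw [hkq i] at hki ⊢
  split_ifs at hki ⊢
  exacts [chaconT_mem_level_iff hki, Iff.rfl]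

theorem chaconCd_eq_iUnion_box (n : ℕ) :
    chaconCd ι n = ⋃ k : ι → Fin (chaconH n / 2), box n fun i => k i := by
  ext x
  rw [mem_iUnion]
  constructor
  · intro hx
    choose k hk hxk using hx
    exact ⟨fun i => ⟨k i, hk i⟩, mem_box.mpr hxk⟩
  · rintro ⟨k, hk⟩ i
    exact ⟨k i, (k i).2, mem_box.mp hk i⟩

theorem monotone_chaconCd : Monotone (chaconCd ι) := by
  intro n m hnm x hx i
  rcases hnm.eq_or_lt with rfl | hlt
  · exact hx i
  · obtain ⟨k, hk, hxk⟩ := hx i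
    exact exists_mem_level_half (hk.trans_le (chaconH_half_le n)) hxk hlt

section Countable

variable [Countable ι]

theorem measurableSet_box (n : ℕ) (k : ι → ℕ) : MeasurableSet (box n k) :=
  .univ_pi fun i => measurableSet_level n (k i)

theorem measurableEmbedding_partialT (E : Set ι) : MeasurableEmbedding (partialT E) := by
  refine (measurable_pi_lambda _ fun i => ?_).measurableEmbedding (partialT_injective E)
  unfold partialT
  split_ifs
  exacts [measurable_chaconT.comp (measurable_pi_apply i), measurable_pi_apply i]

theorem measurableEmbedding_chaconTd : MeasurableEmbedding (chaconTd ι) :=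
  partialT_univ (ι := ι) ▸ measurableEmbedding_partialT univ

theorem measure_box_add {σ : Measure (ι → ChaconX)} (hσ : MeasurePreserving (chaconTd ι) σ σ)
    {a : ℕ} (hk : ∀ i, k i + a < chaconH n) : σ (box n fun i => k i + a) = σ (box n k) := by
  rw [← iterate_chaconTd_preimage_box hk, (hσ.iterate a).measure_preimage
    (measurableSet_box n _).nullMeasurableSet]

end Countable

section Finite

variable [Finite ι]

theorem measurableSet_chaconCd (n : ℕ) : MeasurableSet (chaconCd ι n) := by
  rw [chaconCd_eq_iUnion_box]
  exact .iUnion fun k => measurableSet_box n _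

theorem eventually_forall_exists_mem_level (x : ι → ChaconX) (a : ℕ) :
    ∀ᶠ n in atTop, ∀ i, ∃ k, k + a < chaconH n / 2 ∧ x i ∈ level n k :=
  eventually_all.mpr fun i => eventually_exists_mem_level (x i) a

theorem eventually_mem_chaconCd (x : ι → ChaconX) : ∀ᶠ n in atTop, x ∈ chaconCd ι n :=
  eventually_forall_exists_mem_level x 0

theorem iUnion_chaconCd : ⋃ n, chaconCd ι n = univ :=
  eq_univ_of_forall fun x => mem_iUnion.mpr (eventually_mem_chaconCd x).exists

end Finite

/-! ### Boundedly finite measures -/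

section BoundedlyFinite

theorem isBounded_chaconC (n : ℕ) : Bornology.IsBounded (chaconC n) := by
  rw [← Bornology.isBounded_image_subtype_val]
  refine ((Bornology.isBounded_biUnion_finset (Finset.range (chaconH n / 2))).mpr fun k _ =>
    Metric.isBounded_Ico (chaconL n k) (chaconL n k + (3 : ℝ)⁻¹ ^ n)).subset ?_
  rintro - ⟨x, ⟨k, hk, hxk⟩, rfl⟩
  exact mem_biUnion (Finset.mem_coe.mpr (Finset.mem_range.mpr hk)) hxk

theorem eventually_subset_chaconC {A : Set ChaconX} (hA : Bornology.IsBounded A) :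
    ∀ᶠ n in atTop, A ⊆ chaconC n := by
  obtain ⟨r, hr⟩ := hA.subset_closedBall ⊥
  obtain ⟨m, hm⟩ := pow_unbounded_of_one_lt r one_lt_two
  filter_upwards [eventually_gt_atTop m] with n hn x hx
  have hdist : |(x : ℝ) - 0| ≤ r := hr hx
  rw [sub_zero] at hdist
  obtain ⟨k, hk, hxk⟩ := exists_mem_level_of_lt (((le_abs_self _).trans hdist).trans_lt hm)
  exact exists_mem_level_half hk hxk hn

theorem isBounded_chaconCd (n : ℕ) : Bornology.IsBounded (chaconCd ι n) :=
  (Bornology.IsBounded.pi fun _ => isBounded_chaconC n).subset fun _ hx i _ => hx i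

theorem eventually_subset_chaconCd [Finite ι] {A : Set (ι → ChaconX)}
    (hA : Bornology.IsBounded A) : ∀ᶠ n in atTop, A ⊆ chaconCd ι n := by
  filter_upwards [eventually_all.mpr fun i =>
    eventually_subset_chaconC (Bornology.forall_isBounded_image_eval_iff.mpr hA i)] with n hn
  exact fun x hx i => hn i (mem_image_of_mem _ hx)

variable [Fintype ι]

theorem boundedlyFinite_iff {σ : Measure (ι → ChaconX)} :
    BoundedlyFinite σ ↔ ∀ n, σ (chaconCd ι n) < ⊤ := by
  refine ⟨fun h n => h _ (measurableSet_chaconCd n) (isBounded_chaconCd n), fun h A _ hA => ?_⟩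
  obtain ⟨n, hn⟩ := (eventually_subset_chaconCd hA).exists
  exact (measure_mono hn).trans_lt (h n)

theorem sigmaFinite_of_boundedlyFinite {σ : Measure (ι → ChaconX)} (hσ : BoundedlyFinite σ) :
    SigmaFinite σ :=
  ⟨⟨⟨chaconCd ι, fun _ => trivial, boundedlyFinite_iff.mp hσ, iUnion_chaconCd⟩⟩⟩

end BoundedlyFinite

end Box

/-! ### Adjacent transitions -/

section Adjacent

variable {ι : Type} {n : ℕ} {k : ι → ℕ} {τ : ι → Fin 3}

/-- The subcolumns of tower `n` containing the coordinates of `x`. -/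
def columns (n : ℕ) (x : ι → ChaconX) (i : ι) : Fin 3 := ⟨column n (x i), column_lt n (x i)⟩

/-- The heights in tower `n + 1` of the part of `box n k` lying in the subcolumns `τ`. -/
def subHeights (n : ℕ) (k : ι → ℕ) (τ : ι → Fin 3) (i : ι) : ℕ := k i + colShift n (τ i)

/-- The heights `k` are those of levels of tower `n` other than its bottom level. -/
def IsInterior (n : ℕ) (k : ι → ℕ) : Prop := ∀ i, 1 ≤ k i ∧ k i < chaconH n

/-- A nonconstant choice of subcolumns involving only the left and the middle one, or only the
middle and the right one. -/
def IsAdjacent (τ : ι → Fin 3) : Prop :=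
  (∃ i j, τ i ≠ τ j) ∧ ((∀ i, (τ i : ℕ) ≤ 1) ∨ ∀ i, 1 ≤ (τ i : ℕ))

/-- The coordinates for which `τ` chooses the middle subcolumn. -/
def middle (τ : ι → Fin 3) : Set ι := {i | (τ i : ℕ) = 1}

/-- The points whose coordinates lie in adjacent subcolumns of tower `n`. -/
def adjacentAt (ι : Type) (n : ℕ) : Set (ι → ChaconX) := {x | IsAdjacent (columns n x)}

/-- The points making infinitely many adjacent transitions. -/
def adjacentInfinitelyOften (ι : Type) : Set (ι → ChaconX) := limsup (adjacentAt ι) atTop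

theorem mem_adjacentInfinitelyOften {x : ι → ChaconX} :
    x ∈ adjacentInfinitelyOften ι ↔ ∃ᶠ n in atTop, IsAdjacent (columns n x) :=
  mem_limsup_iff_frequently_mem

theorem IsAdjacent.nonempty_middle (hτ : IsAdjacent τ) :
    (middle τ).Nonempty ∧ (middle τ)ᶜ.Nonempty := by
  obtain ⟨⟨i, j, hij⟩, hadj⟩ := hτ
  have hne : (τ i : ℕ) ≠ τ j := Fin.val_ne_of_ne hij
  have hi : i ∈ middle τ ∧ j ∉ middle τ ∨ j ∈ middle τ ∧ i ∉ middle τ := by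
    have := (τ i).2
    have := (τ j).2
    simp only [middle, mem_ofPred_eq]
    rcases hadj with h | h <;> have := h i <;> have := h j <;> omega
  exact hi.elim (fun h => ⟨⟨i, h.1⟩, j, h.2⟩) fun h => ⟨⟨j, h.1⟩, i, h.2⟩

theorem subHeights_lt (hk : ∀ i, k i < chaconH n) (τ : ι → Fin 3) (i : ι) :
    subHeights n k τ i < chaconH (n + 1) := add_colShift_lt _ (hk i)

theorem IsInterior.lt (hk : IsInterior n k) (i : ι) : k i < chaconH n := (hk i).2

theorem IsInterior.subHeights (hk : IsInterior n k) (τ : ι → Fin 3) :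
    IsInterior (n + 1) (subHeights n k τ) :=
  fun i => ⟨(hk i).1.trans (Nat.le_add_right _ _), subHeights_lt hk.lt τ i⟩

theorem mem_box_subHeights_iff (hk : ∀ i, k i < chaconH n) {x : ι → ChaconX} :
    x ∈ box (n + 1) (subHeights n k τ) ↔ x ∈ box n k ∧ columns n x = τ := by
  simp only [mem_box, subHeights, mem_level_succ_iff (hk _) (τ _).2, forall_and, funext_iff,
    Fin.ext_iff, columns]

theorem measurable_columns (n : ℕ) : Measurable (columns n : (ι → ChaconX) → ι → Fin 3) :=
  measurable_pi_lambda _ fun i => (measurable_of_countable (Fin.ofNat 3)).comp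
    ((measurable_triadicFloor (n + 1)).comp (measurable_pi_apply i))

theorem measurableSet_adjacentAt [Finite ι] (n : ℕ) : MeasurableSet (adjacentAt ι n) :=
  measurable_columns n (toFinite {τ | IsAdjacent τ}).measurableSet

section Countable

variable [Countable ι] {σ : Measure (ι → ChaconX)}

-- The height gained from the left to the middle subcolumn is `hₙ`, and from the middle to the
-- right one it is `hₙ + 1`; the map `partialT` makes up for the difference.
theorem measure_box_of_succ_eq (hσ : MeasurePreserving (chaconTd ι) σ σ) {τ' : ι → Fin 3}
    (hττ' : ∀ i, (τ i : ℕ) + 1 = τ' i) (hk : ∀ i, k i < chaconH n) :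
    σ (box (n + 1) (subHeights n k τ)) =
      σ.map (partialT (middle τ)) (box (n + 1) (subHeights n k τ')) := by
  have hlt (i : ι) : subHeights n k τ i + chaconH n < chaconH (n + 1) := by
    have := add_colShift_lt_half (τ i) (hk i)
    rw [chaconH_succ_half] at this
    rw [subHeights, chaconH_succ]
    omega
  rw [(measurableEmbedding_partialT _).map_apply, ← measure_box_add hσ hlt,
    partialT_preimage_box (subHeights_lt hk τ')]
  intro i
  have hτ : (τ i : ℕ) = 0 ∨ (τ i : ℕ) = 1 := by have := hττ' i; omega
  rcases hτ with h | h <;> simp [subHeights, middle, ← hττ' i, h, colShift]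
  omega

theorem measure_box_of_eq_succ (hσ : MeasurePreserving (chaconTd ι) σ σ) {τ' : ι → Fin 3}
    (hττ' : ∀ i, (τ' i : ℕ) + 1 = τ i) (hk : IsInterior n k) :
    σ (box (n + 1) (subHeights n k τ)) =
      σ.map (partialT (middle τ)) (box (n + 1) (subHeights n k τ')) := by
  let q (i : ι) : ℕ := if i ∈ middle τ then k i - 1 else k i + chaconH n
  have hτ (i : ι) : (τ i : ℕ) = 1 ∧ (τ' i : ℕ) = 0 ∨ (τ i : ℕ) = 2 ∧ (τ' i : ℕ) = 1 := by
    have := hττ' i; omega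
  have hlt (i : ι) : q i + (chaconH n + 1) < chaconH (n + 1) := by
    have := hk.lt i
    simp only [q, chaconH_succ]
    split_ifs <;> omega
  have hq : subHeights n k τ = fun i => q i + (chaconH n + 1) := by
    funext i
    have := (hk i).1
    rcases hτ i with ⟨h, -⟩ | ⟨h, -⟩ <;> simp [q, middle, subHeights, colShift, h] <;> omega
  rw [(measurableEmbedding_partialT _).map_apply, hq, measure_box_add hσ hlt,
    partialT_preimage_box (subHeights_lt hk.lt τ')]
  intro i
  have := (hk i).1
  rcases hτ i with ⟨h, h'⟩ | ⟨h, h'⟩ <;>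
    simp [q, middle, subHeights, colShift, h, h']
  omega

theorem IsAdjacent.exists_measure_box_eq (hσ : MeasurePreserving (chaconTd ι) σ σ)
    (hτ : IsAdjacent τ) :
    ∃ τ' : ι → Fin 3, IsAdjacent τ' ∧ ∀ (n : ℕ) (k : ι → ℕ), IsInterior n k →
      σ (box (n + 1) (subHeights n k τ)) =
        σ.map (partialT (middle τ)) (box (n + 1) (subHeights n k τ')) := by
  obtain ⟨⟨i, j, hij⟩, hle | hge⟩ := hτ
  · have hlt (i : ι) : (τ i : ℕ) + 1 < 3 := by have := hle i; omega
    refine ⟨fun i => ⟨τ i + 1, hlt i⟩, ⟨⟨i, j, ?_⟩, .inr fun i => Nat.le_add_left _ _⟩,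
      fun n k hk => measure_box_of_succ_eq hσ (fun i => rfl) hk.lt⟩
    simpa [Fin.ext_iff] using hij
  · have hsub (i : ι) : (τ i : ℕ) - 1 + 1 = τ i := Nat.sub_add_cancel (hge i)
    have hle (i : ι) : (τ i : ℕ) - 1 ≤ 1 := by have := (τ i).2; omega
    refine ⟨fun i => ⟨τ i - 1, (hle i).trans_lt (by omega)⟩, ⟨⟨i, j, ?_⟩, .inl hle⟩,
      fun n k hk => measure_box_of_eq_succ hσ hsub hk⟩
    have := hsub i
    have := hsub j
    simp only [ne_eq, Fin.ext_iff] at hij ⊢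
    omega

end Countable

section Fintype

variable [Fintype ι] {σ : Measure (ι → ChaconX)}

/-- The sum of the images of `σ` under the maps `partialT E` provided by adjacent transitions. -/
def shiftedSum (σ : Measure (ι → ChaconX)) : Measure (ι → ChaconX) :=
  ∑ τ : ι → Fin 3 with IsAdjacent τ, σ.map (partialT (middle τ))

theorem measure_box_inter_columns (ν : Measure (ι → ChaconX)) (hk : ∀ i, k i < chaconH n)
    (p : (ι → Fin 3) → Prop) :
    ν (box n k ∩ {x | p (columns n x)}) =
      ∑ τ with p τ, ν (box (n + 1) (subHeights n k τ)) := by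
  rw [← measure_biUnion_finset _ fun τ _ => measurableSet_box _ _]
  · congr 1
    ext x
    simp [mem_box_subHeights_iff hk, and_comm]
  · intro τ _ τ' _ hne
    refine Set.disjoint_left.mpr fun x hx hx' => hne ?_
    exact ((mem_box_subHeights_iff hk).mp hx).2.symm.trans ((mem_box_subHeights_iff hk).mp hx').2

theorem measure_box_eq_add (ν : Measure (ι → ChaconX)) (hk : ∀ i, k i < chaconH n) :
    ν (box n k) = ν (box n k ∩ adjacentAt ι n) +
      ∑ τ with ¬IsAdjacent τ, ν (box (n + 1) (subHeights n k τ)) := by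
  rw [← measure_inter_add_sdiff _ (measurableSet_adjacentAt n)]
  exact congrArg _ ((measure_box_inter_columns ν hk (¬IsAdjacent ·)).trans (by congr!))

theorem measure_box_inter_adjacentAt_le (hσ : MeasurePreserving (chaconTd ι) σ σ)
    (hk : IsInterior n k) :
    σ (box n k ∩ adjacentAt ι n) ≤ shiftedSum σ (box n k ∩ adjacentAt ι n) := by
  rw [shiftedSum, Measure.finsetSum_apply]
  refine (measure_box_inter_columns σ hk.lt IsAdjacent).trans_le (Finset.sum_le_sum fun τ hτ => ?_)
  obtain ⟨τ', hτ', heq⟩ := (Finset.mem_filter.mp hτ).2.exists_measure_box_eq hσ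
  rw [heq n k hk]
  refine measure_mono fun x hx => ?_
  obtain ⟨hxk, rfl⟩ := (mem_box_subHeights_iff hk.lt).mp hx
  exact ⟨hxk, hτ'⟩

theorem measure_box_inter_iUnion_adjacentAt_le (hσ : MeasurePreserving (chaconTd ι) σ σ)
    (hk : IsInterior n k) (M : ℕ) :
    σ (box n k ∩ ⋃ m ∈ Ico n (n + M), adjacentAt ι m) ≤ shiftedSum σ (box n k) := by
  induction M generalizing n k with
  | zero => simp
  | succ M ih =>
    set V := ⋃ m ∈ Ico n (n + (M + 1)), adjacentAt ι m
    set V' := ⋃ m ∈ Ico (n + 1) (n + 1 + M), adjacentAt ι m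
    have hV : V ⊆ adjacentAt ι n ∪ V' := by
      refine iUnion₂_subset fun m hm x hx => ?_
      rcases hm.1.eq_or_lt with rfl | hlt
      · exact .inl hx
      · exact .inr (mem_biUnion (⟨hlt, by have := hm.2; omega⟩ : m ∈ Ico (n + 1) _) hx)
    have hsub (τ : ι → Fin 3) (hτ : ¬IsAdjacent τ) :
        box (n + 1) (subHeights n k τ) ∩ V ⊆ box (n + 1) (subHeights n k τ) ∩ V' := by
      rintro x ⟨hx, hxV⟩
      refine ⟨hx, (hV hxV).resolve_left fun hadj => hτ ?_⟩
      rwa [← ((mem_box_subHeights_iff hk.lt).mp hx).2]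
    rw [← Measure.restrict_apply (measurableSet_box n k), measure_box_eq_add _ hk.lt,
      measure_box_eq_add (shiftedSum σ) hk.lt]
    refine add_le_add ?_ (Finset.sum_le_sum fun τ hτ => ?_)
    · exact (Measure.restrict_apply_le _ _).trans (measure_box_inter_adjacentAt_le hσ hk)
    · rw [Measure.restrict_apply (measurableSet_box _ _)]
      exact (measure_mono (hsub τ (Finset.mem_filter.mp hτ).2)).trans
        (ih (hk.subHeights τ))

theorem measure_box_inter_adjacentInfinitelyOften_le (hσ : MeasurePreserving (chaconTd ι) σ σ)
    (hk : IsInterior n k) :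
    σ (box n k ∩ adjacentInfinitelyOften ι) ≤ shiftedSum σ (box n k) := by
  have hsub : box n k ∩ adjacentInfinitelyOften ι ⊆
      ⋃ M, box n k ∩ ⋃ m ∈ Ico n (n + M), adjacentAt ι m := by
    rintro x ⟨hxk, hx⟩
    obtain ⟨m, hm, hadj⟩ := frequently_atTop.mp (mem_adjacentInfinitelyOften.mp hx) n
    exact mem_iUnion.mpr ⟨m - n + 1, hxk, mem_biUnion (⟨hm, by omega⟩ : m ∈ Ico n _) hadj⟩
  refine (measure_mono hsub).trans ?_
  rw [Monotone.measure_iUnion]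
  · exact iSup_le fun M => measure_box_inter_iUnion_adjacentAt_le hσ hk M
  · intro M M' hM
    exact inter_subset_inter_right _ (biUnion_subset_biUnion_left (Ico_subset_Ico_right (by omega)))

end Fintype

end Adjacent

/-! ### Comparison of measures on boxes -/

section Comparison

variable {ι : Type} {n N : ℕ} {k l : ι → ℕ} {x : ι → ChaconX}

theorem box_subset_box (hn : n ≤ N) (hxk : x ∈ box n k) (hxl : x ∈ box N l) :
    box N l ⊆ box n k := fun _ hy => mem_box.mpr fun i =>
  mem_level_of_le hn (mem_box.mp hxl i) (mem_box.mp hy i) (mem_box.mp hxk i)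

theorem box_eq_of_mem (hk : ∀ i, k i < chaconH n) (hl : ∀ i, l i < chaconH n) (hxk : x ∈ box n k)
    (hxl : x ∈ box n l) : k = l :=
  funext fun i => level_unique (hk i) (hl i) (mem_box.mp hxk i) (mem_box.mp hxl i)

theorem eventually_exists_isInterior_mem_box [Finite ι] (hx : ∀ i, x i ≠ ⊥) :
    ∀ᶠ n in atTop, ∃ k, IsInterior n k ∧ x ∈ box n k := by
  filter_upwards [eventually_all.mpr fun i => eventually_exists_mem_level_pos (hx i)] with n hn
  choose k hk1 hk hxk using hn
  exact ⟨k, fun i => ⟨hk1 i, (hk i).trans_le (chaconH_half_le n)⟩, mem_box.mpr hxk⟩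

theorem ae_forall_ne_bot [Countable ι] {σ : Measure (ι → ChaconX)}
    (hσ : MeasurePreserving (chaconTd ι) σ σ) : ∀ᵐ x ∂σ, ∀ i, x i ≠ ⊥ := by
  rw [← hσ.map_eq, measurableEmbedding_chaconTd.ae_map_iff]
  exact .of_forall fun x i => chaconT_ne_bot (x i)

theorem eventually_box_subset_of_isOpen [Finite ι] {U : Set (ι → ChaconX)} (hU : IsOpen U)
    (hx : x ∈ U) : ∀ᶠ n in atTop, ∀ k, x ∈ box n k → box n k ⊆ U := by
  cases nonempty_fintype ι
  obtain ⟨ε, hε, hball⟩ := Metric.isOpen_iff.mp hU x hx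
  have hlim := tendsto_pow_atTop_nhds_zero_of_lt_one (r := (3 : ℝ)⁻¹) (by norm_num) (by norm_num)
  filter_upwards [hlim.eventually_lt_const hε] with n hn k hxk y hy
  refine hball ((dist_pi_lt_iff hε).mpr fun i => hn.trans' ?_)
  have hxi : (x i : ℝ) ∈ chaconLevel n (k i) := mem_box.mp hxk i
  have hyi : (y i : ℝ) ∈ chaconLevel n (k i) := mem_box.mp hy i
  rw [Subtype.dist_eq, Real.dist_eq, abs_lt]
  constructor <;> linarith [hxi.1, hxi.2, hyi.1, hyi.2]

theorem measure_eq_zero_of_forall_box [Finite ι] {μ : Measure (ι → ChaconX)}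
    {S : Set (ι → ChaconX)} (hμ : ∀ᵐ x ∂μ, ∀ i, x i ≠ ⊥)
    (hS : ∀ n k, IsInterior n k → μ (S ∩ box n k) = 0) : μ S = 0 := by
  have hnull : ∀ᵐ x ∂μ, ∀ n k, IsInterior n k → x ∉ S ∩ box n k := by
    simp only [ae_all_iff, ← measure_eq_zero_iff_ae_notMem]
    exact hS
  rw [measure_eq_zero_iff_ae_notMem]
  filter_upwards [hμ, hnull] with x hx hxnull hxS
  obtain ⟨n, k, hk, hxk⟩ := (eventually_exists_isInterior_mem_box hx).exists
  exact hxnull n k hk ⟨hxS, hxk⟩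

section InnerBoxes

variable {V : Set (ι → ChaconX)}

/-- The union of the interior boxes of tower `n` contained in `V`. -/
def innerBoxes (n : ℕ) (V : Set (ι → ChaconX)) : Set (ι → ChaconX) :=
  ⋃ k ∈ {k | IsInterior n k ∧ box n k ⊆ V}, box n k

theorem innerBoxes_subset (n : ℕ) (V : Set (ι → ChaconX)) : innerBoxes n V ⊆ V :=
  iUnion₂_subset fun _ hk => hk.2

theorem monotone_innerBoxes (V : Set (ι → ChaconX)) : Monotone (innerBoxes · V) := by
  refine monotone_nat_of_le_succ fun n x hx => ?_
  obtain ⟨k, ⟨hk, hkV⟩, hxk⟩ := mem_iUnion₂.mp hx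
  have hmem := (mem_box_subHeights_iff hk.lt).mpr ⟨hxk, rfl⟩
  exact mem_biUnion ⟨hk.subHeights _, (box_subset_box n.le_succ hxk hmem).trans hkV⟩ hmem

theorem measure_innerBoxes [Finite ι] (μ : Measure (ι → ChaconX)) (n : ℕ) (V : Set (ι → ChaconX)) :
    μ (innerBoxes n V) = ∑' k : {k | IsInterior n k ∧ box n k ⊆ V}, μ (box n k) := by
  refine measure_biUnion (to_countable _) (fun k hk l hl hkl => ?_) fun k _ => measurableSet_box n k
  exact Set.disjoint_left.mpr fun x hxk hxl => hkl (box_eq_of_mem hk.1.lt hl.1.lt hxk hxl)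

theorem measure_le_of_forall_box_le [Finite ι] {μ ν : Measure (ι → ChaconX)}
    (hμ : ∀ᵐ x ∂μ, ∀ i, x i ≠ ⊥)
    (hle : ∀ n k, IsInterior n k → μ (box n k) ≤ ν (box n k))
    (hV : ∀ x ∈ V, ∀ᶠ n in atTop, ∀ k, x ∈ box n k → box n k ⊆ V) : μ V ≤ ν V := by
  have hcover : ∀ᵐ x ∂μ, x ∈ V → x ∈ ⋃ n, innerBoxes n V := by
    filter_upwards [hμ] with x hx hxV
    obtain ⟨n, hn, k, hk, hxk⟩ := ((hV x hxV).and (eventually_exists_isInterior_mem_box hx)).exists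
    exact mem_iUnion_of_mem n (mem_biUnion ⟨hk, hn k hxk⟩ hxk)
  refine (measure_mono_ae (t := ⋃ n, innerBoxes n V) hcover).trans ?_
  rw [(monotone_innerBoxes V).measure_iUnion]
  refine iSup_le fun n => le_trans ?_ (measure_mono (innerBoxes_subset n V))
  rw [measure_innerBoxes, measure_innerBoxes]
  exact ENNReal.tsum_le_tsum fun k => hle n k k.2.1

end InnerBoxes

theorem absolutelyContinuous_of_forall_box_le [Finite ι] {μ ν : Measure (ι → ChaconX)}
    (hμ : ∀ᵐ x ∂μ, ∀ i, x i ≠ ⊥) (hν : ∀ n k, IsInterior n k → ν (box n k) ≠ ⊤)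
    (hle : ∀ n k, IsInterior n k → μ (box n k) ≤ ν (box n k)) : μ ≪ ν := by
  cases nonempty_fintype ι
  intro S hS
  refine measure_eq_zero_of_forall_box hμ fun n k hk => ?_
  have : IsFiniteMeasure (ν.restrict (box n k)) := isFiniteMeasure_restrict.mpr (hν n k hk)
  refine nonpos_iff_eq_zero.mp (le_of_forall_gt fun ε hε => ?_)
  obtain ⟨U, hSU, hU, hUε⟩ := S.exists_isOpen_lt_of_lt (μ := ν.restrict (box n k)) ε
    (by rwa [Measure.absolutelyContinuous_of_le Measure.restrict_le_self hS])
  have hV : ∀ x ∈ U ∩ box n k, ∀ᶠ N in atTop, ∀ l, x ∈ box N l → box N l ⊆ U ∩ box n k := by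
    rintro x ⟨hxU, hxk⟩
    filter_upwards [eventually_box_subset_of_isOpen hU hxU, eventually_ge_atTop n] with N hN hn l hl
    exact subset_inter (hN l hl) (box_subset_box hn hxk hl)
  calc μ (S ∩ box n k) ≤ μ (U ∩ box n k) := measure_mono (inter_subset_inter_left _ hSU)
    _ ≤ ν (U ∩ box n k) := measure_le_of_forall_box_le hμ hle hV
    _ < ε := by rwa [← Measure.restrict_apply hU.measurableSet]

end Comparison

/-! ### The invariance dichotomy -/

section Invariance

variable {ι : Type} {σ : Measure (ι → ChaconX)}

theorem ergodic_map_partialT [Countable ι] (he : Ergodic (chaconTd ι) σ) (E : Set ι) :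
    Ergodic (chaconTd ι) (σ.map (partialT E)) :=
  ((measurableEmbedding_partialT E).measurable.measurePreserving σ).ergodic_of_ergodic_semiconj he
    measurableEmbedding_chaconTd.measurable (semiconj_partialT_chaconTd E)

variable [Fintype ι]

theorem measure_box_ne_top (hb : BoundedlyFinite σ) {n : ℕ} {k : ι → ℕ}
    (hk : ∀ i, k i < chaconH n) : σ (box n k) ≠ ⊤ := by
  have hsub : box n k ⊆ chaconCd ι (n + 1) := fun _ hx i =>
    exists_mem_level_half (hk i) (mem_box.mp hx i) n.lt_succ_self
  exact ((measure_mono hsub).trans_lt (boundedlyFinite_iff.mp hb (n + 1))).ne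

theorem map_partialT_box_ne_top (hb : BoundedlyFinite σ) (E : Set ι) {n : ℕ} {k : ι → ℕ}
    (hk : IsInterior n k) : σ.map (partialT E) (box n k) ≠ ⊤ := by
  rw [(measurableEmbedding_partialT E).map_apply,
    partialT_preimage_box (q := fun i => if i ∈ E then k i - 1 else k i) hk.lt]
  · refine measure_box_ne_top hb fun i => ?_
    have := hk.lt i
    split_ifs <;> omega
  · intro i
    have := (hk i).1
    split_ifs <;> omega

theorem shiftedSum_box_ne_top (hb : BoundedlyFinite σ) {n : ℕ} {k : ι → ℕ}
    (hk : IsInterior n k) : shiftedSum σ (box n k) ≠ ⊤ := by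
  rw [shiftedSum, Measure.finsetSum_apply]
  exact ENNReal.sum_ne_top.mpr fun τ _ => map_partialT_box_ne_top hb _ hk

theorem restrict_adjacentInfinitelyOften_absolutelyContinuous (hb : BoundedlyFinite σ)
    (hσ : MeasurePreserving (chaconTd ι) σ σ) :
    σ.restrict (adjacentInfinitelyOften ι) ≪ shiftedSum σ := by
  refine absolutelyContinuous_of_forall_box_le (ae_restrict_of_ae (ae_forall_ne_bot hσ))
    (fun n k hk => shiftedSum_box_ne_top hb hk) fun n k hk => ?_
  rw [Measure.restrict_apply (measurableSet_box n k)]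
  exact measure_box_inter_adjacentInfinitelyOften_le hσ hk

theorem exists_not_mutuallySingular_map_partialT (hb : BoundedlyFinite σ)
    (hσ : MeasurePreserving (chaconTd ι) σ σ) (hadj : σ (adjacentInfinitelyOften ι) ≠ 0) :
    ∃ E : Set ι, E.Nonempty ∧ Eᶜ.Nonempty ∧ ¬σ.map (partialT E) ⟂ₘ σ := by
  by_contra! hsing
  have hsum : shiftedSum σ ⟂ₘ σ := by
    rw [shiftedSum, ← Measure.sum_coe_finset, Measure.MutuallySingular.sum_left]
    rintro ⟨τ, hτ⟩
    have := (Finset.mem_filter.mp hτ).2.nonempty_middle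
    exact hsing _ this.1 this.2
  have hself := hsum.mono_ac (restrict_adjacentInfinitelyOften_absolutelyContinuous hb hσ)
    (Measure.restrict_le_self (s := adjacentInfinitelyOften ι)).absolutelyContinuous
  exact hadj (Measure.restrict_eq_zero.mp (Measure.MutuallySingular.self_iff _ |>.mp hself))

theorem exists_map_partialT_eq_smul (h0 : σ ≠ 0) (hb : BoundedlyFinite σ)
    (he : Ergodic (chaconTd ι) σ) (hadj : σ (adjacentInfinitelyOften ι) ≠ 0) :
    ∃ E : Set ι, E.Nonempty ∧ Eᶜ.Nonempty ∧
      ∃ c : ℝ≥0∞, c ≠ 0 ∧ c ≠ ⊤ ∧ σ.map (partialT E) = c • σ := by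
  have := sigmaFinite_of_boundedlyFinite hb
  obtain ⟨E, hE, hEc, hsing⟩ :=
    exists_not_mutuallySingular_map_partialT hb he.toMeasurePreserving hadj
  have := (measurableEmbedding_partialT E).sigmaFinite_map (μ := σ)
  obtain ⟨c, hc⟩ := (mutuallySingular_or_eq_smul measurableEmbedding_chaconTd
    (ergodic_map_partialT he E) he).resolve_left hsing
  refine ⟨E, hE, hEc, c, ?_, ?_, hc⟩
  · rintro rfl
    rw [zero_smul] at hc
    exact hsing (hc ▸ Measure.MutuallySingular.zero_left)
  · rintro rfl
    refine h0 (Measure.measure_univ_eq_zero.mp (measure_eq_zero_of_forall_box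
      (ae_forall_ne_bot he.toMeasurePreserving) fun n k hk => ?_))
    have hfin := map_partialT_box_ne_top hb E hk
    rw [hc, Measure.smul_apply, smul_eq_mul] at hfin
    rw [univ_inter]
    by_contra hne
    exact hfin (ENNReal.top_mul hne)

end Invariance

/-! ### Recurrence to the boxes -/

section Recurrence

variable {n m k : ℕ} {x : ChaconX}

theorem iterate_chaconH_mem_level (hk : k < chaconH n) (hx : x ∈ level n k)
    (hcol : column n x = 0) : chaconT^[chaconH n] x ∈ level n k := by
  have hmem := mem_level_succ hk hx
  rw [hcol, colShift_zero, add_zero] at hmem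
  have hlt : k + chaconH n < chaconH (n + 1) := add_colShift_lt 1 hk
  exact ((mem_level_succ_iff hk (r := 1) (by omega)).mp
    ((iterate_chaconT_mem_level_iff hlt).mpr hmem)).1

theorem iterate_chaconH_succ_mem_level (hk : k < chaconH n) (hx : x ∈ level n k)
    (hcol : column n x = 1) : chaconT^[chaconH n + 1] x ∈ level n k := by
  have hmem := mem_level_succ hk hx
  rw [hcol, colShift_one] at hmem
  have heq : k + chaconH n + (chaconH n + 1) = k + colShift n 2 := by rw [colShift_two]; omega
  refine ((mem_level_succ_iff hk (r := 2) (by omega)).mp ?_).1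
  rw [← heq, iterate_chaconT_mem_level_iff (heq ▸ add_colShift_lt 2 hk)]
  exact hmem

theorem exists_iterate_chaconH_eq (hk : k < chaconH n) (hx : x ∈ level n k)
    (hcol : column n x = 1) : ∃ z ∈ level n k, chaconT^[chaconH n] z = x := by
  have hmem := mem_level_succ hk hx
  rw [hcol] at hmem
  obtain ⟨z, hz, hzx⟩ := exists_iterate_chaconT_eq (j := chaconH n) (add_colShift_lt 1 hk) hmem
  exact ⟨z, ((mem_level_succ_iff hk (r := 0) (by omega)).mp hz).1, hzx⟩

theorem exists_iterate_chaconH_succ_eq (hk : k < chaconH n) (hx : x ∈ level n k)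
    (hcol : column n x = 2) : ∃ z ∈ level n k, chaconT^[chaconH n + 1] z = x := by
  have hmem := mem_level_succ hk hx
  have heq : k + colShift n 2 = k + chaconH n + (chaconH n + 1) := by rw [colShift_two]; omega
  rw [hcol, heq] at hmem
  obtain ⟨z, hz, hzx⟩ := exists_iterate_chaconT_eq (heq ▸ add_colShift_lt 2 hk) hmem
  exact ⟨z, ((mem_level_succ_iff hk (r := 1) (by omega)).mp hz).1, hzx⟩

theorem exists_mem_level_of_le (hk : k < chaconH n) (hx : x ∈ level n k) (hm : n ≤ m) :
    ∃ l < chaconH m, x ∈ level m l := by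
  rcases hm.eq_or_lt with rfl | hlt
  · exact ⟨k, hk, hx⟩
  · obtain ⟨l, hl, hxl⟩ := exists_mem_level_half hk hx hlt
    exact ⟨l, hl.trans_le (chaconH_half_le m), hxl⟩

theorem iterate_chaconH_mem_chaconC (hm : n ≤ m) (hk1 : 1 ≤ k) (hk : k < chaconH n / 2)
    (hx : x ∈ level n k) (hcol : column m x ≤ 1) : chaconT^[chaconH m] x ∈ chaconC n := by
  have hkn : k < chaconH n := hk.trans_le (chaconH_half_le n)
  obtain ⟨l, hl, hxl⟩ := exists_mem_level_of_le hkn hx hm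
  rcases Nat.le_one_iff_eq_zero_or_eq_one.mp hcol with hcol | hcol
  · exact ⟨k, hk, mem_level_of_le hm hxl (iterate_chaconH_mem_level hl hxl hcol) hx⟩
  · have hmem := mem_level_of_le hm hxl (iterate_chaconH_succ_mem_level hl hxl hcol) hx
    obtain ⟨j, rfl⟩ := Nat.exists_eq_add_of_le' hk1
    rw [iterate_succ_apply', chaconT_mem_level_iff hkn] at hmem
    exact ⟨j, j.le_succ.trans_lt hk, hmem⟩

theorem exists_mem_chaconC_iterate_chaconH_eq (hm : n ≤ m) (hk : k + 1 < chaconH n / 2)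
    (hx : x ∈ level n k) (hcol : 1 ≤ column m x) :
    ∃ z ∈ chaconC n, chaconT^[chaconH m] z = x := by
  have hkn : k + 1 < chaconH n := hk.trans_le (chaconH_half_le n)
  obtain ⟨l, hl, hxl⟩ := exists_mem_level_of_le (by omega) hx hm
  have hlt := column_lt m x
  rcases (by omega : column m x = 1 ∨ column m x = 2) with hcol | hcol
  · obtain ⟨z, hz, hzx⟩ := exists_iterate_chaconH_eq hl hxl hcol
    exact ⟨z, ⟨k, by omega, mem_level_of_le hm hxl hz hx⟩, hzx⟩
  · obtain ⟨z, hz, hzx⟩ := exists_iterate_chaconH_succ_eq hl hxl hcol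
    exact ⟨chaconT z, ⟨k + 1, hk, chaconT_mem_level hkn (mem_level_of_le hm hxl hz hx)⟩, hzx⟩

theorem lt_chaconH (n : ℕ) : n < chaconH n :=
  (Nat.lt_pow_self (by norm_num)).trans_le (six_pow_le_chaconH n)

theorem infinite_of_frequently_chaconH_mem {S : Set ℕ} (hS : ∃ᶠ n in atTop, chaconH n ∈ S) :
    S.Infinite := by
  refine infinite_of_forall_exists_gt fun N => ?_
  obtain ⟨n, hn, hnS⟩ := frequently_atTop.mp hS N
  exact ⟨_, hnS, hn.trans_lt (lt_chaconH n)⟩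

end Recurrence

section Visits

variable {ι : Type}

theorem exists_infinite_visits [Finite ι] {x : ι → ChaconX}
    (hadj : x ∈ adjacentInfinitelyOften ι) (hx : ∀ i, x i ≠ ⊥) :
    ∃ n, x ∈ chaconCd ι n ∧ ({j : ℕ | (chaconTd ι)^[j] x ∈ chaconCd ι n}.Infinite ∨
      {j : ℕ | x ∈ (chaconTd ι)^[j] '' chaconCd ι n}.Infinite) := by
  obtain ⟨n, hn, k, hkint, hxk⟩ :=
    ((eventually_forall_exists_mem_level x 1).and (eventually_exists_isInterior_mem_box hx)).exists
  have hk : ∀ i, k i + 1 < chaconH n / 2 := fun i => by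
    obtain ⟨l, hl, hxl⟩ := hn i
    have := chaconH_half_le n
    rwa [level_unique (hkint.lt i) (by omega) (mem_box.mp hxk i) hxl]
  refine ⟨n, fun i => ⟨k i, Nat.lt_of_succ_lt (hk i), mem_box.mp hxk i⟩, ?_⟩
  have hfreq := (mem_adjacentInfinitelyOften.mp hadj).and_eventually (eventually_ge_atTop n)
  simp only [IsAdjacent, and_or_left, or_and_right, frequently_or_distrib] at hfreq
  refine hfreq.imp (fun h => ?_) fun h => ?_ <;>
    refine infinite_of_frequently_chaconH_mem (h.mono fun m hm => ?_)
  · intro i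
    rw [iterate_chaconTd]
    exact iterate_chaconH_mem_chaconC hm.2 (hkint i).1 (Nat.lt_of_succ_lt (hk i))
      (mem_box.mp hxk i) (hm.1.2 i)
  · choose z hzC hz using fun i =>
      exists_mem_chaconC_iterate_chaconH_eq hm.2 (hk i) (mem_box.mp hxk i) (hm.1.2 i)
    exact ⟨z, hzC, funext fun i => (iterate_chaconTd _ z i).trans (hz i)⟩

theorem ae_finite_setOf_mem_of_measure_eq_pow_mul {α : Type*} [MeasurableSpace α] {μ : Measure α}
    {A : ℕ → Set α} {a c : ℝ≥0∞} (hc : c < 1) (ha : a ≠ ⊤) (hA : ∀ j, μ (A j) = c ^ j * a) :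
    ∀ᵐ x ∂μ, {j | x ∈ A j}.Finite := by
  refine ae_finite_setOfPred_mem ?_
  simp_rw [hA]
  rw [ENNReal.tsum_mul_right, ENNReal.tsum_geometric]
  exact ENNReal.mul_ne_top (ENNReal.inv_ne_top.mpr (tsub_pos_of_lt hc).ne') ha

theorem map_iterate_eq_smul {α : Type*} [MeasurableSpace α] {f : α → α} (hf : Measurable f)
    {μ : Measure α} {c : ℝ≥0∞} (hc : μ.map f = c • μ) (j : ℕ) : μ.map f^[j] = c ^ j • μ := by
  induction j with
  | zero => simp
  | succ j ih =>
    rw [iterate_succ', ← Measure.map_map hf (hf.iterate j), ih, Measure.map_smul, hc, smul_smul,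
      pow_succ]

variable {E : Set ι} {σ : Measure (ι → ChaconX)} {c : ℝ≥0∞}

theorem map_partialT_compl_eq_smul [Countable ι] (hσ : MeasurePreserving (chaconTd ι) σ σ)
    (hc0 : c ≠ 0) (hct : c ≠ ⊤) (hc : σ.map (partialT E) = c • σ) :
    σ.map (partialT Eᶜ) = c⁻¹ • σ := by
  have hcomp : partialT Eᶜ ∘ partialT E = chaconTd ι := funext fun x => by
    simpa only [compl_compl, comp_apply] using partialT_partialT_compl Eᶜ x
  have hmap := hσ.map_eq
  rw [← hcomp, ← Measure.map_map (measurableEmbedding_partialT _).measurable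
    (measurableEmbedding_partialT _).measurable, hc, Measure.map_smul] at hmap
  conv_rhs => rw [← hmap]
  rw [smul_smul, ENNReal.inv_mul_cancel hc0 hct, one_smul]

theorem iterate_partialT_compl_iterate_partialT (E : Set ι) (j : ℕ) (x : ι → ChaconX) :
    (partialT Eᶜ)^[j] ((partialT E)^[j] x) = (chaconTd ι)^[j] x := by
  funext i
  by_cases hi : i ∈ E <;> simp [iterate_partialT, iterate_chaconTd, hi]

theorem iterate_partialT_mem_chaconCd {n j : ℕ} {x : ι → ChaconX} (hx : x ∈ chaconCd ι n)
    (hj : (chaconTd ι)^[j] x ∈ chaconCd ι n) : (partialT E)^[j] x ∈ chaconCd ι n := by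
  intro i
  rw [iterate_partialT]
  split_ifs
  · exact iterate_chaconTd j x i ▸ hj i
  · exact hx i

variable [Fintype ι]

theorem ae_finite_visits (hb : BoundedlyFinite σ) (hc1 : c < 1)
    (hc : σ.map (partialT E) = c • σ) :
    ∀ᵐ x ∂σ, ∀ n, {j : ℕ | (partialT E)^[j] x ∈ chaconCd ι n}.Finite := by
  refine ae_all_iff.mpr fun n => ae_finite_setOf_mem_of_measure_eq_pow_mul
    (A := fun j => (partialT E)^[j] ⁻¹' chaconCd ι n) hc1 (boundedlyFinite_iff.mp hb n).ne
    fun j => ?_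
  rw [← (iterate_measurableEmbedding (measurableEmbedding_partialT E) j).map_apply,
    map_iterate_eq_smul (measurableEmbedding_partialT E).measurable hc, Measure.smul_apply,
    smul_eq_mul]

theorem ae_finite_backward_visits (hb : BoundedlyFinite σ) (hc0 : c ≠ 0) (hc1 : c < 1)
    (hc : σ.map (partialT E) = c⁻¹ • σ) :
    ∀ᵐ x ∂σ, ∀ n, {j : ℕ | x ∈ (partialT E)^[j] '' chaconCd ι n}.Finite := by
  refine ae_all_iff.mpr fun n => ae_finite_setOf_mem_of_measure_eq_pow_mul
    (A := fun j => (partialT E)^[j] '' chaconCd ι n) hc1 (boundedlyFinite_iff.mp hb n).ne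
    fun j => ?_
  have hemb := iterate_measurableEmbedding (measurableEmbedding_partialT E) j
  have hmap := hemb.map_apply σ ((partialT E)^[j] '' chaconCd ι n)
  rw [preimage_image_eq _ hemb.injective,
    map_iterate_eq_smul (measurableEmbedding_partialT E).measurable hc, Measure.smul_apply,
    smul_eq_mul] at hmap
  rw [← hmap, ← mul_assoc, ← mul_pow, ENNReal.mul_inv_cancel hc0 hc1.ne_top, one_pow, one_mul]

theorem measure_adjacentInfinitelyOften_eq_zero_of_lt_one (hb : BoundedlyFinite σ)
    (hσ : MeasurePreserving (chaconTd ι) σ σ) (hc0 : c ≠ 0) (hc1 : c < 1)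
    (hc : σ.map (partialT E) = c • σ) : σ (adjacentInfinitelyOften ι) = 0 := by
  rw [measure_eq_zero_iff_ae_notMem]
  filter_upwards [ae_forall_ne_bot hσ, ae_finite_visits hb hc1 hc, ae_finite_backward_visits hb hc0
    hc1 (map_partialT_compl_eq_smul hσ hc0 hc1.ne_top hc)] with x hx hforth hback hadj
  obtain ⟨n, hxn, hinf | hinf⟩ := exists_infinite_visits hadj hx
  · exact hinf ((hforth n).subset fun j hj => iterate_partialT_mem_chaconCd hxn hj)
  · refine hinf ((hback n).subset ?_)
    rintro j ⟨z, hz, rfl⟩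
    exact ⟨(partialT E)^[j] z, iterate_partialT_mem_chaconCd hz hxn,
      iterate_partialT_compl_iterate_partialT E j z⟩

theorem exists_measurePreserving_partialT (h0 : σ ≠ 0) (hb : BoundedlyFinite σ)
    (he : Ergodic (chaconTd ι) σ) (hadj : σ (adjacentInfinitelyOften ι) ≠ 0) :
    ∃ E : Set ι, E.Nonempty ∧ Eᶜ.Nonempty ∧ MeasurePreserving (partialT E) σ σ ∧
      MeasurePreserving (partialT Eᶜ) σ σ := by
  obtain ⟨E, hE, hEc, c, hc0, hct, hc⟩ := exists_map_partialT_eq_smul h0 hb he hadj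
  have hσ := he.toMeasurePreserving
  have hc' := map_partialT_compl_eq_smul hσ hc0 hct hc
  obtain rfl : c = 1 := by
    by_contra hne
    refine hadj ((lt_or_gt_of_ne hne).elim (fun hlt => ?_) fun hgt => ?_)
    · exact measure_adjacentInfinitelyOften_eq_zero_of_lt_one hb hσ hc0 hlt hc
    · exact measure_adjacentInfinitelyOften_eq_zero_of_lt_one hb hσ (ENNReal.inv_ne_zero.mpr hct)
        (ENNReal.inv_lt_one.mpr hgt) hc'
  exact ⟨E, hE, hEc, ⟨(measurableEmbedding_partialT E).measurable, by rw [hc, one_smul]⟩,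
    (measurableEmbedding_partialT Eᶜ).measurable, by rw [hc', inv_one, one_smul]⟩

end Visits

/-! ### Ergodic measures invariant under each factor of a product -/

section Splitting

variable {X Y : Type*} [MeasurableSpace X] [MeasurableSpace Y] {S : X → X} {T : Y → Y}
  {σ : Measure (X × Y)} {A : ℕ → Set X} {B : ℕ → Set Y} {G G' : Set Y}

/-- The projection to the first factor of the part of `σ` lying over `G`. -/
def fstOver (σ : Measure (X × Y)) (G : Set Y) : Measure X := (σ.restrict (univ ×ˢ G)).fst

theorem fstOver_apply {H : Set X} (hH : MeasurableSet H) : fstOver σ G H = σ (H ×ˢ G) := by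
  rw [fstOver, Measure.fst_apply hH, Measure.restrict_apply (measurable_fst hH),
    ← prod_univ, prod_inter_prod, inter_univ, univ_inter]

theorem measurePreserving_fstOver (hS : MeasurableEmbedding S)
    (hσ : MeasurePreserving (Prod.map S id) σ σ) :
    MeasurePreserving S (fstOver σ G) (fstOver σ G) := by
  refine ⟨hS.measurable, Measure.ext fun H hH => ?_⟩
  rw [Measure.map_apply hS.measurable hH, fstOver_apply hH, fstOver_apply (hS.measurable hH),
    ← hσ.measure_preimage_emb (hS.prodMap .id) (H ×ˢ G), preimage_prod_map_prod, preimage_id]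

theorem ergodic_fstOver (hS : MeasurableEmbedding S) (hσ : MeasurePreserving (Prod.map S id) σ σ)
    (he : PreErgodic (Prod.map S T) σ) : Ergodic S (fstOver σ G) := by
  refine ⟨measurePreserving_fstOver hS hσ, ⟨fun H hH hinv => ?_⟩⟩
  have hinv' : Prod.map S T ⁻¹' (Prod.fst ⁻¹' H) = Prod.fst ⁻¹' H := by
    conv_rhs => rw [← hinv]
    rfl
  rw [eventuallyConst_set', ae_eq_empty, ae_eq_univ, fstOver_apply hH, fstOver_apply hH.compl]
  exact (he.measure_self_or_compl_eq_zero (measurable_fst hH) hinv').imp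
    (measure_mono_null fun z hz => hz.1) (measure_mono_null fun z hz => hz.1)

theorem sigmaFinite_fstOver (hA : ∀ m, MeasurableSet (A m)) (hAU : ⋃ m, A m = univ)
    (hfin : ∀ m, σ (A m ×ˢ G) < ⊤) : SigmaFinite (fstOver σ G) :=
  ⟨⟨⟨A, fun _ => trivial, fun m => (fstOver_apply (hA m)).trans_lt (hfin m), hAU⟩⟩⟩

theorem fstOver_eq_smul (hS : MeasurableEmbedding S) (hσ : MeasurePreserving (Prod.map S id) σ σ)
    (he : PreErgodic (Prod.map S T) σ) (hA : ∀ m, MeasurableSet (A m)) (hAU : ⋃ m, A m = univ)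
    (hfin : ∀ m, σ (A m ×ˢ G') < ⊤) (hG : G ⊆ G') :
    ∃ c : ℝ≥0∞, fstOver σ G = c • fstOver σ G' := by
  have := sigmaFinite_fstOver hA hAU hfin
  have := sigmaFinite_fstOver hA hAU fun m =>
    (measure_mono (prod_mono_right hG)).trans_lt (hfin m)
  refine eq_smul_of_absolutelyContinuous hS (measurePreserving_fstOver hS hσ)
    (ergodic_fstOver hS hσ he) (.mk fun H hH h => ?_)
  rw [fstOver_apply hH] at h ⊢
  exact measure_mono_null (prod_mono_right hG) h

theorem measure_prod_mul_measure_prod_comm (hS : MeasurableEmbedding S)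
    (hσ : MeasurePreserving (Prod.map S id) σ σ) (he : PreErgodic (Prod.map S T) σ)
    (hA : ∀ m, MeasurableSet (A m)) (hAU : ⋃ m, A m = univ) {K : Set Y}
    (hfin : ∀ m, σ (A m ×ˢ K) < ⊤) (hG : G ⊆ K) (hG' : G' ⊆ K) {H H' : Set X}
    (hH : MeasurableSet H) (hH' : MeasurableSet H') :
    σ (H ×ˢ G) * σ (H' ×ˢ G') = σ (H ×ˢ G') * σ (H' ×ˢ G) := by
  obtain ⟨c, hc⟩ := fstOver_eq_smul hS hσ he hA hAU hfin hG
  obtain ⟨c', hc'⟩ := fstOver_eq_smul hS hσ he hA hAU hfin hG'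
  rw [← fstOver_apply hH, ← fstOver_apply hH, ← fstOver_apply hH', ← fstOver_apply hH', hc, hc']
  simp only [Measure.smul_apply, smul_eq_mul]
  ring

theorem eq_prod_of_rectangles (hB : ∀ n, MeasurableSet (B n)) (hBU : ⋃ n, B n = univ)
    {σ₁ : Measure X} {σ₂ : Measure Y} [SigmaFinite σ₁] [SigmaFinite σ₂]
    (h : ∀ H G n, MeasurableSet H → MeasurableSet G → G ⊆ B n → σ (H ×ˢ G) = σ₁ H * σ₂ G) :
    σ = σ₁.prod σ₂ := by
  have hU : ⋃ n, (univ : Set X) ×ˢ B n = univ := by rw [← prod_iUnion, hBU, univ_prod_univ]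
  refine (Measure.ext_iff_of_iUnion_eq_univ hU).mpr fun n => ?_
  rw [← Measure.prod_restrict, Measure.restrict_univ]
  refine (Measure.prod_eq fun H G hH hG => ?_).symm
  rw [Measure.restrict_apply (hH.prod hG), prod_inter_prod, inter_univ,
    h H _ n hH (hG.inter (hB n)) inter_subset_right, Measure.restrict_apply hG]

theorem ergodic_fstOver_swap (hT : MeasurableEmbedding T)
    (hσ : MeasurePreserving (Prod.map id T) σ σ) (he : PreErgodic (Prod.map S T) σ) {A : Set X} :
    Ergodic T (fstOver (σ.map Prod.swap) A) :=
  have hswap : MeasurePreserving Prod.swap σ (σ.map Prod.swap) :=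
    measurable_swap.measurePreserving σ
  ergodic_fstOver hT
    (hswap.of_semiconj hσ (fun _ => rfl) (hT.prodMap .id).measurable)
    (hswap.preErgodic_of_preErgodic_semiconj he (f' := Prod.map T S) fun _ => rfl)

theorem fstOver_swap_apply {A : Set X} (hG : MeasurableSet G) (hA : MeasurableSet A) :
    fstOver (σ.map Prod.swap) A G = σ (A ×ˢ G) := by
  rw [fstOver_apply hG, Measure.map_apply measurable_swap (hG.prod hA), preimage_swap_prod]

theorem exists_measure_prod_ne_zero (h0 : σ ≠ 0) (hAU : ⋃ m, A m = univ)
    (hBU : ⋃ n, B n = univ) : ∃ m n, σ (A m ×ˢ B n) ≠ 0 := by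
  by_contra! h
  refine h0 (Measure.measure_univ_eq_zero.mp ?_)
  rw [← univ_prod_univ, ← hAU, ← hBU, ← iUnion_prod]
  exact measure_iUnion_null fun p => h p.1 p.2

theorem exists_eq_prod_of_ergodic (hS : MeasurableEmbedding S) (hT : MeasurableEmbedding T)
    (h0 : σ ≠ 0) (hσS : MeasurePreserving (Prod.map S id) σ σ)
    (hσT : MeasurePreserving (Prod.map id T) σ σ) (he : PreErgodic (Prod.map S T) σ)
    (hA : ∀ m, MeasurableSet (A m)) (hAU : ⋃ m, A m = univ)
    (hB : ∀ n, MeasurableSet (B n)) (hBU : ⋃ n, B n = univ) (hBmono : Monotone B)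
    (hfin : ∀ m n, σ (A m ×ˢ B n) < ⊤) :
    ∃ (σ₁ : Measure X) (σ₂ : Measure Y), (Ergodic S σ₁ ∧ ∀ m, σ₁ (A m) < ⊤) ∧
      (Ergodic T σ₂ ∧ ∀ n, σ₂ (B n) < ⊤) ∧ σ = σ₁.prod σ₂ := by
  obtain ⟨m₀, n₀, hw⟩ := exists_measure_prod_ne_zero h0 hAU hBU
  set w := σ (A m₀ ×ˢ B n₀)
  have hw' : w ≠ ⊤ := (hfin m₀ n₀).ne
  have hinv : w⁻¹ ≠ ⊤ := ENNReal.inv_ne_top.mpr hw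
  set σ₁ := fstOver σ (B n₀)
  set σ₂ := w⁻¹ • fstOver (σ.map Prod.swap) (A m₀)
  have hσ₁ : ∀ {H}, MeasurableSet H → σ₁ H = σ (H ×ˢ B n₀) := fstOver_apply
  have hσ₂ : ∀ {G}, MeasurableSet G → σ₂ G = w⁻¹ * σ (A m₀ ×ˢ G) := fun hG =>
    congrArg (w⁻¹ * ·) (fstOver_swap_apply hG (hA m₀))
  have hfin₁ : ∀ m, σ₁ (A m) < ⊤ := fun m => (hσ₁ (hA m)).trans_lt (hfin m n₀)
  have hfin₂ : ∀ n, σ₂ (B n) < ⊤ := fun n =>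
    (hσ₂ (hB n)).trans_lt (ENNReal.mul_lt_top hinv.lt_top (hfin m₀ n))
  have : SigmaFinite σ₁ := ⟨⟨⟨A, fun _ => trivial, hfin₁, hAU⟩⟩⟩
  have : SigmaFinite σ₂ := ⟨⟨⟨B, fun _ => trivial, hfin₂, hBU⟩⟩⟩
  refine ⟨σ₁, σ₂, ⟨ergodic_fstOver hS hσS he, hfin₁⟩,
    ⟨(ergodic_fstOver_swap hT hσT he).smul_measure _, hfin₂⟩, ?_⟩
  refine eq_prod_of_rectangles hB hBU fun H G n hH hG hGn => ?_
  have hcomm : σ (H ×ˢ G) * w = σ (H ×ˢ B n₀) * σ (A m₀ ×ˢ G) :=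
    measure_prod_mul_measure_prod_comm hS hσS he hA hAU (fun m => hfin m (max n n₀))
      (hGn.trans (hBmono (le_max_left _ _))) (hBmono (le_max_right _ _)) hH (hA m₀)
  rw [hσ₁ hH, hσ₂ hG, mul_left_comm, ← hcomm, mul_comm, mul_assoc, ENNReal.mul_inv_cancel hw hw',
    mul_one]

end Splitting

/-! ### Diagonals -/

section Diagonal

theorem chaconTZ_natCast (j : ℕ) : chaconTZ j = chaconT^[j] := by
  rw [chaconTZ, if_pos (Int.natCast_nonneg j), Int.toNat_natCast]

theorem chaconTdZ_natCast (ι : Type) (j : ℕ) : chaconTdZ ι j = (chaconTd ι)^[j] := by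
  funext x i
  rw [chaconTdZ, chaconTZ_natCast, iterate_chaconTd]

theorem chaconTZ_neg_natCast (j : ℕ) : chaconTZ (-j) = chaconTinv^[j] := by
  rcases Nat.eq_zero_or_pos j with rfl | hj
  · exact chaconTZ_natCast 0
  · rw [chaconTZ, if_neg (by omega), neg_neg, Int.toNat_natCast]

theorem level_nonempty (n k : ℕ) : (level n k).Nonempty :=
  ⟨⟨chaconL n k, chaconL_nonneg n k⟩, left_mem_Ico.mpr (lt_add_of_pos_right _ (by positivity))⟩

theorem exists_chaconTinv_mem_top_level (n : ℕ) :
    ∃ x ∈ level n 0, chaconTinv x ∈ level n (chaconH n - 1) := by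
  have hn := chaconH_pos n
  obtain ⟨z, hz⟩ := level_nonempty (n + 1) (chaconH n - 1)
  have hTz : chaconT z ∈ level (n + 1) (0 + chaconH n) := by
    have := chaconT_mem_level (by rw [chaconH_succ]; omega) hz
    rwa [Nat.sub_add_cancel hn, ← zero_add (chaconH n)] at this
  refine ⟨chaconT z, ?_, ?_⟩
  · rw [← colShift_one, mem_level_succ_iff hn (by omega)] at hTz
    exact hTz.1
  · rw [← add_zero (chaconH n - 1), ← colShift_zero n, mem_level_succ_iff (by omega) (by omega)]
      at hz
    rw [chaconTinv_chaconT]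
    exact hz.1

variable {ι : Type} {n : ℕ} {k l : ι → ℕ}

theorem box_nonempty (n : ℕ) (k : ι → ℕ) : (box n k).Nonempty :=
  univ_pi_nonempty_iff.mpr fun i => level_nonempty n (k i)

theorem image_chaconTdZ_box {j : ℕ} (hk : ∀ i, k i + j < chaconH n) :
    chaconTdZ ι j '' box n k = box n fun i => k i + j := by
  rw [chaconTdZ_natCast, ← iterate_chaconTd_preimage_box hk, image_preimage_eq_iff]
  intro x hx
  choose z _ hz using fun i => exists_iterate_chaconT_eq (hk i) (mem_box.mp hx i)
  exact ⟨z, funext fun i => (iterate_chaconTd j z i).trans (hz i)⟩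

theorem not_image_chaconTdZ_neg_one_box_subset {i : ι} (hi : k i = 0) :
    ¬ chaconTdZ ι (-1) '' box n k ⊆ chaconCd ι n := by
  intro hsub
  obtain ⟨x, hx⟩ := box_nonempty n k
  obtain ⟨u, hu, hTu⟩ := exists_chaconTinv_mem_top_level n
  have hmem : update x i u ∈ box n k := by
    rw [mem_box, forall_update_iff x fun j y => y ∈ level n (k j)]
    exact ⟨hi ▸ hu, fun j _ => mem_box.mp hx j⟩
  obtain ⟨l, hl, hxl⟩ := hsub (mem_image_of_mem _ hmem) i
  have hinv : chaconTdZ ι (-1) (update x i u) i = chaconTinv u := by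
    rw [chaconTdZ, update_self]
    exact congrFun (chaconTZ_neg_natCast 1) u
  rw [hinv] at hxl
  have := chaconH_pos n
  have := level_unique (by omega) (by omega) hxl hTu
  omega

theorem not_box_subset_chaconCd {i : ι} (hi : k i = chaconH n / 2) :
    ¬ box n k ⊆ chaconCd ι n := by
  intro hsub
  obtain ⟨x, hx⟩ := box_nonempty n k
  obtain ⟨l, hl, hxl⟩ := hsub hx i
  have := chaconH_pos n
  have := level_unique (by omega) (by omega) hxl (mem_box.mp hx i)
  omega

/-- The boxes with heights `k` and `l` in the same tower lie on a common diagonal. -/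
def Aligned (k l : ι → ℕ) : Prop := ∃ j : ℤ, ∀ i, (k i : ℤ) = l i + j

/-- The union of the boxes of `Cₙ` on the diagonal of `box n k`. -/
def diagonalThrough (n : ℕ) (k : ι → ℕ) : Set (ι → ChaconX) :=
  {x | ∃ l, (∀ i, l i < chaconH n / 2) ∧ Aligned l k ∧ x ∈ box n l}

theorem diagonalThrough_add {n c ℓ : ℕ} {q : ι → ℕ} {i₀ i₁ : ι} (hq₀ : q i₀ = 0)
    (hq₁ : ∀ i, q i ≤ q i₁) (hℓ : q i₁ + (ℓ + 1) = chaconH n / 2) :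
    diagonalThrough n (fun i => q i + c) =
      ⋃ j ∈ Finset.range (ℓ + 1), box n fun i => q i + j := by
  ext x
  simp only [mem_iUnion, Finset.mem_range]
  constructor
  · rintro ⟨l, hl, ⟨j, hj⟩, hx⟩
    have hql : l = fun i => q i + l i₀ := by
      funext i
      have hi := hj i
      have hi₀ := hj i₀
      dsimp only at hi hi₀
      omega
    have hl₁ := hl i₁
    rw [congrFun hql i₁] at hl₁
    exact ⟨l i₀, by omega, hql ▸ hx⟩
  · rintro ⟨j, hj, hx⟩
    exact ⟨_, fun i => by have := hq₁ i; omega, ⟨j - c, fun i => by push_cast; omega⟩, hx⟩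

theorem isNDiagonal_diagonalThrough [Finite ι] [Nonempty ι] (hk : ∀ i, k i < chaconH n / 2) :
    IsNDiagonal ι n (diagonalThrough n k) := by
  obtain ⟨i₀, hmin⟩ := Finite.exists_min k
  obtain ⟨i₁, hmax⟩ := Finite.exists_max k
  obtain ⟨q, hq⟩ : ∃ q : ι → ℕ, ∀ i, q i + k i₀ = k i :=
    ⟨fun i => k i - k i₀, fun i => Nat.sub_add_cancel (hmin i)⟩
  obtain ⟨ℓ, hℓ⟩ : ∃ ℓ, q i₁ + (ℓ + 1) = chaconH n / 2 :=
    ⟨chaconH n / 2 - q i₁ - 1, by have := hq i₁; have := hk i₁; omega⟩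
  have hq₁ (i : ι) : q i ≤ q i₁ := by have := hq i; have := hq i₁; have := hmax i; omega
  have hq₀ : q i₀ = 0 := by have := hq i₀; omega
  have himage (j : ℕ) (hj : j ≤ ℓ + 1) : chaconTdZ ι j '' box n q = box n fun i => q i + j :=
    image_chaconTdZ_box fun i => by have := hq₁ i; omega
  refine ⟨box n q, ℓ, fun j hj => ?_, not_image_chaconTdZ_neg_one_box_subset hq₀, ?_, ?_⟩
  · rw [himage j (by omega)]
    have hlt (i : ι) : q i + j < chaconH n / 2 := by have := hq₁ i; omega
    exact ⟨_, hlt, ext fun _ => mem_box⟩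
  · rw [← Nat.cast_add_one, himage (ℓ + 1) le_rfl]
    exact not_box_subset_chaconCd hℓ
  · rw [iUnion₂_congr fun j hj => himage j (Finset.mem_range.mp hj).le,
      ← diagonalThrough_add hq₀ hq₁ hℓ, funext hq]

end Diagonal

/-! ### Measures without adjacent transitions -/

section Nonadjacent

variable {ι : Type} {n : ℕ} {k l : ι → ℕ} {x z : ι → ChaconX}

theorem eq_of_colShift_sub_lt {r s : ℕ} (hr : r < 3) (hs : s < 3)
    (h : |(colShift n r : ℤ) - colShift n s| < chaconH n) : r = s := by
  rw [abs_lt] at h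
  unfold colShift at h
  split_ifs at h <;> omega

theorem exists_eq_zero_and_eq_two {τ : ι → Fin 3} (hconst : ¬ ∀ i j, τ i = τ j)
    (hτ : ¬ IsAdjacent τ) : ∃ i j, (τ i : ℕ) = 0 ∧ (τ j : ℕ) = 2 := by
  simp only [IsAdjacent, not_and, not_or, not_forall, not_le] at hconst hτ
  obtain ⟨⟨j, hj⟩, i, hi⟩ := hτ hconst
  exact ⟨i, j, Nat.lt_one_iff.mp hi, by have := (τ j).2; omega⟩

theorem aligned_of_subHeights {τ υ : ι → Fin 3} (hk : ∀ i, k i < chaconH n / 2)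
    (hl : ∀ i, l i < chaconH n / 2) (hυ : ¬ IsAdjacent υ)
    (hkl : Aligned (subHeights n k τ) (subHeights n l υ)) : Aligned k l := by
  obtain ⟨j, hj⟩ := hkl
  simp only [subHeights, Nat.cast_add] at hj
  by_cases hconst : ∀ i i', υ i = υ i'
  · have hτ (i i' : ι) : τ i = τ i' := by
      have h := hj i
      rw [hconst i i'] at h
      refine Fin.ext (eq_of_colShift_sub_lt (n := n) (τ i).2 (τ i').2 (abs_lt.mpr ?_))
      have := hj i'; have := hk i; have := hk i'; have := hl i; have := hl i'
      omega
    rcases isEmpty_or_nonempty ι with _ | ⟨⟨i₀⟩⟩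
    · exact ⟨0, isEmptyElim⟩
    · refine ⟨k i₀ - l i₀, fun i => ?_⟩
      have h := hj i
      rw [hτ i i₀, hconst i i₀] at h
      have := hj i₀
      omega
  · obtain ⟨a, b, ha, hb⟩ := exists_eq_zero_and_eq_two hconst hυ
    have hτ (i : ι) : τ i = υ i := by
      refine Fin.ext (eq_of_colShift_sub_lt (n := n) (τ i).2 (υ i).2 (abs_lt.mpr ?_))
      have hja := hj a
      have hjb := hj b
      rw [ha, colShift_zero] at hja
      rw [hb, colShift_two] at hjb
      have := colShift_le n (τ b)
      have := hj i; have := hk i; have := hk a; have := hk b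
      have := hl i; have := hl a; have := hl b
      omega
    refine ⟨j, fun i => ?_⟩
    have h := hj i
    rw [hτ i] at h
    omega

theorem aligned_of_iterate_eq [Finite ι] {a b : ℕ} (hab : (chaconTd ι)^[a] x = (chaconTd ι)^[b] z)
    (hz : ∀ m, n ≤ m → ¬ IsAdjacent (columns m z)) (hk : ∀ i, k i < chaconH n / 2)
    (hl : ∀ i, l i < chaconH n / 2) (hxk : x ∈ box n k) (hzl : z ∈ box n l) : Aligned k l := by
  obtain ⟨N, ⟨hnN, hxN⟩, hzN⟩ := ((eventually_ge_atTop n).and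
    (eventually_forall_exists_mem_level x a)).and (eventually_forall_exists_mem_level z b) |>.exists
  induction hnN using Nat.decreasingInduction generalizing k l with
  | self =>
    have := chaconH_half_le N
    refine ⟨b - a, fun i => ?_⟩
    obtain ⟨k', hk', hxk'⟩ := hxN i
    obtain ⟨l', hl', hzl'⟩ := hzN i
    obtain rfl := level_unique (by omega) ((hk i).trans_le this) hxk' (mem_box.mp hxk i)
    obtain rfl := level_unique (by omega) ((hl i).trans_le this) hzl' (mem_box.mp hzl i)
    rw [← iterate_chaconT_mem_level_iff (j := a) (by omega), ← iterate_chaconTd, hab,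
      iterate_chaconTd] at hxk'
    rw [← iterate_chaconT_mem_level_iff (j := b) (by omega)] at hzl'
    have := level_unique (by omega) (by omega) hxk' hzl'
    omega
  | of_succ m _ ih =>
    have hk' (i : ι) : k i < chaconH m := (hk i).trans_le (chaconH_half_le m)
    have hl' (i : ι) : l i < chaconH m := (hl i).trans_le (chaconH_half_le m)
    exact aligned_of_subHeights hk hl (hz m le_rfl) <|
      ih (fun p hp => hz p (m.le_succ.trans hp)) (fun i => add_colShift_lt_half _ (hk' i))
        (fun i => add_colShift_lt_half _ (hl' i)) ((mem_box_subHeights_iff hk').mpr ⟨hxk, rfl⟩)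
        ((mem_box_subHeights_iff hl').mpr ⟨hzl, rfl⟩)

/-- The points of `Cₙ` making no adjacent transition from tower `n` on. -/
def nonadjacentFrom (ι : Type) (n : ℕ) : Set (ι → ChaconX) :=
  chaconCd ι n ∩ {x | ∀ m, n ≤ m → ¬ IsAdjacent (columns m x)}

theorem monotone_nonadjacentFrom : Monotone (nonadjacentFrom ι) := fun _ _ hnm =>
  inter_subset_inter (monotone_chaconCd hnm) fun _ hx m hm => hx m (hnm.trans hm)

theorem measurableSet_nonadjacentFrom [Finite ι] (n : ℕ) :
    MeasurableSet (nonadjacentFrom ι n) := by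
  refine (measurableSet_chaconCd n).inter ?_
  simp only [ofPred_forall]
  exact .iInter fun m => .iInter fun _ => (measurableSet_adjacentAt m).compl

theorem iUnion_nonadjacentFrom [Finite ι] :
    ⋃ n, nonadjacentFrom ι n = (adjacentInfinitelyOften ι)ᶜ := by
  ext x
  rw [mem_iUnion, mem_compl_iff, mem_adjacentInfinitelyOften, not_frequently]
  constructor
  · rintro ⟨n, -, hx⟩
    exact eventually_atTop.mpr ⟨n, hx⟩
  · intro hx
    exact ((eventually_mem_chaconCd x).and (eventually_forall_ge_atTop.mpr hx)).exists

variable [Finite ι] {σ : Measure (ι → ChaconX)}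

theorem eventually_measure_nonadjacentFrom_ne_zero (h0 : σ ≠ 0)
    (hadj : σ (adjacentInfinitelyOften ι) = 0) : ∀ᶠ n in atTop, σ (nonadjacentFrom ι n) ≠ 0 := by
  have hne : σ (⋃ n, nonadjacentFrom ι n) ≠ 0 := by
    rw [iUnion_nonadjacentFrom]
    intro h
    apply h0
    rw [← Measure.measure_univ_eq_zero, ← compl_union_self (adjacentInfinitelyOften ι),
      measure_union_null h hadj]
  obtain ⟨n, hn⟩ : ∃ n, σ (nonadjacentFrom ι n) ≠ 0 := by
    simpa only [ne_eq, measure_iUnion_null_iff, not_forall] using hne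
  filter_upwards [eventually_ge_atTop n] with m hm h
  exact hn (measure_mono_null (monotone_nonadjacentFrom hm) h)

theorem exists_ae_mem_diagonalThrough (he : Ergodic (chaconTd ι) σ)
    (hn : σ (nonadjacentFrom ι n) ≠ 0) :
    ∃ k : ι → ℕ, (∀ i, k i < chaconH n / 2) ∧ σ (chaconCd ι n \ diagonalThrough n k) = 0 := by
  obtain ⟨k, hk⟩ : ∃ k : ι → Fin (chaconH n / 2),
      σ (nonadjacentFrom ι n ∩ box n fun i => k i) ≠ 0 := by
    by_contra! hnull
    refine hn (measure_mono_null (fun x hx => ?_) (measure_iUnion_null hnull))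
    rw [← inter_iUnion, ← chaconCd_eq_iUnion_box]
    exact ⟨hx, hx.1⟩
  let S := nonadjacentFrom ι n ∩ box n fun i => k i
  have hS : MeasurableSet S := (measurableSet_nonadjacentFrom n).inter (measurableSet_box n _)
  have hconull : σ (grandOrbit (chaconTd ι) S)ᶜ = 0 :=
    (he.measure_self_or_compl_eq_zero (measurableSet_grandOrbit measurableEmbedding_chaconTd hS)
      (preimage_grandOrbit)).resolve_left fun h =>
        hk (measure_mono_null subset_grandOrbit h)
  refine ⟨fun i => k i, fun i => (k i).2, measure_mono_null ?_ hconull⟩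
  rintro x ⟨hxC, hxD⟩ hxS
  obtain ⟨a, b, z, ⟨⟨-, hz⟩, hzk⟩, hab⟩ := mem_grandOrbit.mp hxS
  choose l hl hxl using hxC
  exact hxD ⟨l, hl, aligned_of_iterate_eq hab.symm hz hl (fun i => (k i).2) (mem_box.mpr hxl) hzk,
    mem_box.mpr hxl⟩

end Nonadjacent

theorem isDiagonalMeasure_of_measure_adjacentInfinitelyOften_eq_zero {ι : Type} [Fintype ι]
    [Nonempty ι] {σ : Measure (ι → ChaconX)} (h0 : σ ≠ 0) (hb : BoundedlyFinite σ)
    (he : Ergodic (chaconTd ι) σ) (hadj : σ (adjacentInfinitelyOften ι) = 0) :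
    IsDiagonalMeasure ι σ := by
  obtain ⟨n₀, hn₀⟩ := eventually_atTop.mp (eventually_measure_nonadjacentFrom_ne_zero h0 hadj)
  refine ⟨hb, he.toMeasurePreserving.map_eq, n₀ + 1, n₀.succ_pos, fun n hn => ?_⟩
  obtain ⟨k, hk, hσ⟩ := exists_ae_mem_diagonalThrough he (hn₀ n (n₀.le_succ.trans hn))
  exact ⟨_, isNDiagonal_diagonalThrough hk, hσ⟩

/-! ### Decomposition into diagonal measures -/

section Decomposition

theorem ergodic_of_measErgodic {γ : Type*} [MeasurableSpace γ] {f : γ → γ} {μ : Measure γ}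
    (hf : MeasurePreserving f μ μ) (he : MeasErgodic μ f) : Ergodic f μ :=
  ⟨hf, ⟨fun A hA hinv => eventuallyConst_set'.mpr
    ((he A hA hinv).imp ae_eq_empty.mpr ae_eq_univ.mpr)⟩⟩

/-- The measures classified here: nonzero, boundedly finite, and invariant and ergodic under the
Cartesian power of the Chacon transformation. -/
structure IsAdmissible {ι : Type} [Fintype ι] (σ : Measure (ι → ChaconX)) : Prop where
  ne_zero : σ ≠ 0
  boundedlyFinite : BoundedlyFinite σ
  ergodic : Ergodic (chaconTd ι) σ

theorem measurable_comp_right {α κ : Type} (a : α → κ) :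
    Measurable fun x : κ → ChaconX => x ∘ a :=
  measurable_pi_lambda _ fun i => measurable_pi_apply (a i)

theorem forall_iff_of_range_eq_compl {κ α β : Type*} {a : α → κ} {b : β → κ}
    (hab : range b = (range a)ᶜ) {q : κ → Prop} :
    (∀ i, q i) ↔ (∀ i, q (a i)) ∧ ∀ j, q (b j) := by
  refine ⟨fun h => ⟨fun i => h _, fun j => h _⟩, fun ⟨ha, hb⟩ i => ?_⟩
  by_cases hi : i ∈ range a
  · exact forall_mem_range.mpr ha i hi
  · exact forall_mem_range.mpr hb i (hab.ge hi)

variable {ι κ α β : Type} [Fintype κ] [Fintype α] [Fintype β] {σ : Measure (κ → ChaconX)}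

theorem IsAdmissible.map_comp_equiv (hσ : IsAdmissible σ) (e : α ≃ κ) :
    IsAdmissible (σ.map fun x => x ∘ e) := by
  have hφ : Measurable fun x : κ → ChaconX => x ∘ e := measurable_comp_right e
  have hmp := hφ.measurePreserving σ
  refine ⟨(Measure.map_ne_zero_iff hφ.aemeasurable).mpr hσ.ne_zero,
    boundedlyFinite_iff.mpr fun n => ?_,
    hmp.of_semiconj hσ.ergodic.toMeasurePreserving (fun _ => rfl)
      (measurableEmbedding_chaconTd (ι := α)).measurable,
    hmp.preErgodic_of_preErgodic_semiconj hσ.ergodic.toPreErgodic fun _ => rfl⟩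
  rw [Measure.map_apply hφ (measurableSet_chaconCd n)]
  exact (measure_mono fun x hx i => by simpa using hx (e.symm i)).trans_lt
    (boundedlyFinite_iff.mp hσ.boundedlyFinite n)

theorem exists_prod_of_measurePreserving_partialT (hσ : IsAdmissible σ) {a : α → κ} {b : β → κ}
    (hab : range b = (range a)ᶜ) (hσa : MeasurePreserving (partialT (range a)) σ σ)
    (hσb : MeasurePreserving (partialT (range b)) σ σ) :
    ∃ (σ₁ : Measure (α → ChaconX)) (σ₂ : Measure (β → ChaconX)),
      IsAdmissible σ₁ ∧ IsAdmissible σ₂ ∧ ∀ A : κ → Set ChaconX, (∀ i, MeasurableSet (A i)) →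
        σ (univ.pi A) = σ₁ (univ.pi (A ∘ a)) * σ₂ (univ.pi (A ∘ b)) := by
  have hTa := measurableEmbedding_chaconTd (ι := α)
  have hTb := measurableEmbedding_chaconTd (ι := β)
  set φ : (κ → ChaconX) → (α → ChaconX) × (β → ChaconX) := fun x => (x ∘ a, x ∘ b)
  have hφ : Measurable φ := (measurable_comp_right a).prodMk (measurable_comp_right b)
  have hmp := hφ.measurePreserving σ
  have hab' (i j) : a i ≠ b j := fun h => (hab.le (mem_range_self j)) ⟨i, h⟩
  have hmap : σ.map φ ≠ 0 := (Measure.map_ne_zero_iff hφ.aemeasurable).mpr hσ.ne_zero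
  have hfin (m n) : σ.map φ (chaconCd α m ×ˢ chaconCd β n) < ⊤ := by
    rw [Measure.map_apply hφ ((measurableSet_chaconCd m).prod (measurableSet_chaconCd n))]
    refine (measure_mono fun x hx => ?_).trans_lt
      (boundedlyFinite_iff.mp hσ.boundedlyFinite (max m n))
    exact (forall_iff_of_range_eq_compl hab).mpr ⟨monotone_chaconCd (le_max_left m n) hx.1,
      monotone_chaconCd (le_max_right m n) hx.2⟩
  obtain ⟨σ₁, σ₂, ⟨he₁, hfin₁⟩, ⟨he₂, hfin₂⟩, hprod⟩ := exists_eq_prod_of_ergodic hTa hTb hmap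
    (hmp.of_semiconj hσa (fun x => Prod.ext (funext fun i => if_pos (mem_range_self i))
      (funext fun j => if_neg fun ⟨i, hi⟩ => hab' i j hi)) (hTa.measurable.prodMap measurable_id))
    (hmp.of_semiconj hσb (fun x => Prod.ext (funext fun i => if_neg fun ⟨j, hj⟩ => hab' i j hj.symm)
      (funext fun j => if_pos (mem_range_self j))) (measurable_id.prodMap hTb.measurable))
    (hmp.preErgodic_of_preErgodic_semiconj hσ.ergodic.toPreErgodic fun _ => rfl)
    measurableSet_chaconCd iUnion_chaconCd measurableSet_chaconCd iUnion_chaconCd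
    monotone_chaconCd hfin
  have hσ₂ := boundedlyFinite_iff.mpr hfin₂
  have := sigmaFinite_of_boundedlyFinite hσ₂
  rw [hprod] at hmap
  refine ⟨σ₁, σ₂,
    ⟨fun h => hmap (by rw [h, Measure.zero_prod]), boundedlyFinite_iff.mpr hfin₁, he₁⟩,
    ⟨fun h => hmap (by rw [h, Measure.prod_zero]), hσ₂, he₂⟩, fun A hA => ?_⟩
  have hrect : MeasurableSet (univ.pi (A ∘ a) ×ˢ univ.pi (A ∘ b)) :=
    (MeasurableSet.univ_pi fun i => hA (a i)).prod (MeasurableSet.univ_pi fun j => hA (b j))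
  rw [← Measure.prod_prod, ← hprod, Measure.map_apply hφ hrect]
  refine congrArg σ (Set.ext fun x => ?_)
  simp only [mem_preimage, mem_prod, mem_univ_pi]
  exact forall_iff_of_range_eq_compl hab

theorem range_inclusion_filter (s : Finset ι) (p : ι → Prop) [DecidablePred p] :
    range (inclusion (Finset.filter_subset p s)) = {i : s | p i} := by
  refine (range_inclusion _).trans (Set.ext fun i => ?_)
  exact Finset.mem_filter.trans (and_iff_right i.2)

variable {s : Finset ι}

theorem exists_filter_prod {σ : Measure (s → ChaconX)} (hσ : IsAdmissible σ)
    (hadj : σ (adjacentInfinitelyOften s) ≠ 0) :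
    ∃ p : ι → Prop, (∃ i ∈ s, p i) ∧ (∃ i ∈ s, ¬ p i) ∧
      ∃ (σ₁ : Measure (s.filter p → ChaconX)) (σ₂ : Measure (s.filter (¬ p ·) → ChaconX)),
        IsAdmissible σ₁ ∧ IsAdmissible σ₂ ∧ ∀ A : ι → Set ChaconX, (∀ i, MeasurableSet (A i)) →
          σ (univ.pi fun i => A i) = σ₁ (univ.pi fun i => A i) * σ₂ (univ.pi fun i => A i) := by
  obtain ⟨E, ⟨i, hi⟩, ⟨j, hj⟩, hE, hEc⟩ :=
    exists_measurePreserving_partialT hσ.ne_zero hσ.boundedlyFinite hσ.ergodic hadj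
  obtain ⟨p, rfl⟩ : ∃ p : ι → Prop, {i : s | p i} = E :=
    ⟨(· ∈ Subtype.val '' E), preimage_image_eq E Subtype.val_injective⟩
  rw [← range_inclusion_filter] at hE
  have hp : {i : s | p i}ᶜ = range (inclusion (Finset.filter_subset (¬ p ·) s)) :=
    (range_inclusion_filter s (¬ p ·)).symm
  rw [hp] at hEc
  obtain ⟨σ₁, σ₂, hσ₁, hσ₂, hprod⟩ := exists_prod_of_measurePreserving_partialT hσ
    (hp.symm.trans (congrArg compl (range_inclusion_filter s p).symm)) hE hEc
  exact ⟨p, ⟨i, i.2, hi⟩, ⟨j, j.2, hj⟩, σ₁, σ₂, hσ₁, hσ₂, fun A hA => hprod _ fun i => hA i⟩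

/-- The partition of `s` consisting of the blocks of a partition of its part where `p` holds and of
a partition of its part where `p` fails. -/
def filterUnion (p : ι → Prop) (P : Finpartition (s.filter p))
    (Q : Finpartition (s.filter (¬ p ·))) : Finpartition s where
  parts := P.parts ∪ Q.parts
  supIndep := P.supIndep.union Q.supIndep <| by
    rw [P.sup_parts, Q.sup_parts]
    exact Finset.disjoint_filter_filter_not s s p
  sup_parts := by
    rw [Finset.sup_union, P.sup_parts, Q.sup_parts]
    exact Finset.filter_union_filter_not_eq p s
  bot_notMem h := (Finset.mem_union.mp h).elim P.bot_notMem Q.bot_notMem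

theorem disjoint_parts_filter {p : ι → Prop} (P : Finpartition (s.filter p))
    (Q : Finpartition (s.filter (¬ p ·))) : Disjoint P.parts Q.parts := by
  refine Finset.disjoint_left.mpr fun t hP hQ => ?_
  obtain ⟨i, hi⟩ := P.nonempty_of_mem_parts hP
  exact (Finset.mem_filter.mp (Q.subset hQ hi)).2 (Finset.mem_filter.mp (P.subset hP hi)).2

theorem exists_finpartition_isDiagonalMeasure (hs : s.Nonempty) (σ : Measure (s → ChaconX))
    (hσ : IsAdmissible σ) :
    ∃ (P : Finpartition s) (M : ∀ t : Finset ι, Measure (t → ChaconX)),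
      (∀ t ∈ P.parts, IsDiagonalMeasure t (M t)) ∧
      ∀ A : ι → Set ChaconX, (∀ i, MeasurableSet (A i)) →
        σ (univ.pi fun i => A i) = ∏ t ∈ P.parts, M t (univ.pi fun i => A i) := by
  induction s using Finset.strongInduction with
  | H s ih =>
  by_cases hadj : σ (adjacentInfinitelyOften s) = 0
  · have := hs.to_subtype
    have hdiag := isDiagonalMeasure_of_measure_adjacentInfinitelyOften_eq_zero hσ.ne_zero
      hσ.boundedlyFinite hσ.ergodic hadj
    refine ⟨.indiscrete hs.ne_empty, update (fun _ => 0) s σ, ?_, fun A _ => ?_⟩ <;>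
      simp [hdiag]
  · obtain ⟨p, ⟨i, hi, hpi⟩, ⟨j, hj, hpj⟩, σ₁, σ₂, hσ₁, hσ₂, hprod⟩ := exists_filter_prod hσ hadj
    obtain ⟨P, M, hM, hPM⟩ := ih _ (Finset.filter_ssubset.mpr ⟨j, hj, hpj⟩)
      ⟨i, Finset.mem_filter.mpr ⟨hi, hpi⟩⟩ σ₁ hσ₁
    obtain ⟨Q, N, hN, hQN⟩ := ih _ (Finset.filter_ssubset.mpr ⟨i, hi, not_not.mpr hpi⟩)
      ⟨j, Finset.mem_filter.mpr ⟨hj, hpj⟩⟩ σ₂ hσ₂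
    have hPQ := disjoint_parts_filter P Q
    have hQP : ∀ t ∈ Q.parts, t ∉ P.parts := fun t hQ hP => Finset.disjoint_left.mp hPQ hP hQ
    refine ⟨filterUnion p P Q, fun t => if t ∈ P.parts then M t else N t, fun t ht => ?_,
      fun A hA => ?_⟩
    · rcases Finset.mem_union.mp ht with ht | ht
      · simpa only [if_pos ht] using hM t ht
      · simpa only [if_neg (hQP t ht)] using hN t ht
    · rw [hprod A hA, hPM A hA, hQN A hA, filterUnion, Finset.prod_union hPQ]
      exact congrArg₂ (· * ·) (Finset.prod_congr rfl fun t ht => by simp only [if_pos ht])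
        (Finset.prod_congr rfl fun t ht => by simp only [if_neg (hQP t ht)])

theorem exists_isDiagonalMeasure_of_forall_iff {p q : ι → Prop} [Fintype {i // p i}]
    [Fintype {i // q i}] (h : ∀ i, p i ↔ q i) {M : Measure ({i // p i} → ChaconX)}
    (hM : IsDiagonalMeasure {i // p i} M) :
    ∃ N : Measure ({i // q i} → ChaconX), IsDiagonalMeasure {i // q i} N ∧
      ∀ A : ι → Set ChaconX, M (univ.pi fun i => A i) = N (univ.pi fun i => A i) := by
  obtain rfl : p = q := funext fun i => propext (h i)
  exact ⟨M, by convert hM, fun _ => rfl⟩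

theorem exists_fin_of_finpartition [Fintype ι] (P : Finpartition (Finset.univ : Finset ι)) :
    ∃ (e : Fin P.parts.card ≃ P.parts) (f : ι → Fin P.parts.card), Surjective f ∧
      ∀ i j, i ∈ (e j).1 ↔ f i = j := by
  set e := P.parts.equivFin.symm
  have hf (i j) : i ∈ (e j).1 ↔ e.symm ⟨P.part i, P.part_mem.mpr (Finset.mem_univ i)⟩ = j := by
    rw [← P.part_eq_iff_mem (e j).2, e.symm_apply_eq, Subtype.ext_iff]
  refine ⟨e, _, fun j => ?_, hf⟩
  obtain ⟨i, hi⟩ := P.nonempty_of_mem_parts (e j).2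
  exact ⟨i, (hf i j).mp hi⟩

theorem IsAdmissible.exists_diagonal_decomposition [Nonempty κ] (hσ : IsAdmissible σ) :
    ∃ (r : ℕ) (P : κ → Fin r) (σs : ∀ j : Fin r, Measure ({i : κ // P i = j} → ChaconX)),
      Surjective P ∧ (∀ j : Fin r, IsDiagonalMeasure {i : κ // P i = j} (σs j)) ∧
      ∀ A : κ → Set ChaconX, (∀ i, MeasurableSet (A i)) →
        σ (univ.pi A) = ∏ j : Fin r, σs j (univ.pi fun i => A i.1) := by
  set u := Equiv.subtypeUnivEquiv (Finset.mem_univ (α := κ))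
  obtain ⟨P, M, hM, hPM⟩ := exists_finpartition_isDiagonalMeasure Finset.univ_nonempty _
    (hσ.map_comp_equiv u)
  obtain ⟨e, f, hf, hef⟩ := exists_fin_of_finpartition P
  choose N hN hMN using fun j =>
    exists_isDiagonalMeasure_of_forall_iff (hef · j) (hM _ (e j).2)
  refine ⟨_, f, N, hf, hN, fun A hA => ?_⟩
  have hpre : (fun x => x ∘ u) ⁻¹' (univ.pi fun i => A i) = univ.pi A := by
    ext x
    simp only [mem_preimage, mem_univ_pi]
    exact u.forall_congr fun _ => Iff.rfl
  calc σ (univ.pi A) = ∏ t ∈ P.parts, M t (univ.pi fun i => A i) := by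
        rw [← hPM A hA, Measure.map_apply (measurable_comp_right u)
          (MeasurableSet.univ_pi fun i => hA i), hpre]
    _ = ∏ j, M (e j) (univ.pi fun i => A i) := by
        rw [← Finset.prod_coe_sort, ← e.prod_comp]
    _ = ∏ j, N j (univ.pi fun i => A i) := Finset.prod_congr rfl fun j _ => hMN j A

end Decomposition

/-! ### Totally dissipative measures -/

section Atoms

variable {α : Type*} [MeasurableSpace α] {f : α → α} {μ : Measure α} {x : α} {A : Set α}

theorem exists_measure_singleton_ne_zero [MeasurableSpace.CountablySeparated α]
    (hf : MeasurableEmbedding f) (hμ : PreErgodic f μ) (hA : MeasurableSet A) (h0 : μ A ≠ 0)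
    (hAf : ∀ x ∈ A, ∀ y ∈ A, ∀ a b, f^[b] y = f^[a] x → x = y) : ∃ x, μ {x} ≠ 0 := by
  have hzeroone (B) (hB : MeasurableSet B) : B ∈ ae (μ.restrict A) ∨ Bᶜ ∈ ae (μ.restrict A) := by
    rw [mem_ae_iff, mem_ae_iff, compl_compl, Measure.restrict_apply hB,
      Measure.restrict_apply hB.compl]
    refine (hμ.measure_self_or_compl_eq_zero (measurableSet_grandOrbit hf (hB.inter hA))
      preimage_grandOrbit).symm.imp (measure_mono_null ?_) (measure_mono_null subset_grandOrbit)
    rintro x ⟨hxB, hxA⟩ hx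
    obtain ⟨a, b, y, ⟨hyB, hyA⟩, hxy⟩ := mem_grandOrbit.mp hx
    exact hxB (hAf x hxA y hyA a b hxy ▸ hyB)
  obtain ⟨z, -⟩ := nonempty_of_measure_ne_zero h0
  have : Nonempty α := ⟨z⟩
  obtain ⟨x, hx⟩ := exists_singleton_mem_of_mem_of_forall_separating MeasurableSet univ_mem hzeroone
  refine ⟨x, fun h => h0 ?_⟩
  rw [← Measure.restrict_eq_zero, ← Measure.measure_univ_eq_zero, ← union_compl_self {x}]
  exact measure_union_null (Measure.restrict_le_self.absolutelyContinuous h) (mem_ae_iff.mp hx)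

theorem measure_compl_grandOrbit_singleton [MeasurableSingletonClass α]
    (hf : MeasurableEmbedding f) (hμ : PreErgodic f μ) (hx : μ {x} ≠ 0) :
    μ (grandOrbit f {x})ᶜ = 0 :=
  (hμ.measure_self_or_compl_eq_zero (measurableSet_grandOrbit hf (measurableSet_singleton x))
    preimage_grandOrbit).resolve_left fun h => hx (measure_mono_null subset_grandOrbit h)

theorem measure_singleton_of_mem_grandOrbit (hf : MeasurableEmbedding f)
    (hμ : MeasurePreserving f μ μ) {y : α} (hy : y ∈ grandOrbit f {x}) : μ {y} = μ {x} := by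
  have hiter (j : ℕ) (z : α) : μ {f^[j] z} = μ {z} := by
    rw [← image_singleton, measure_image_of_measurePreserving (iterate_measurableEmbedding hf j)
      (hμ.iterate j)]
  obtain ⟨a, b, _, rfl, hxy⟩ := mem_grandOrbit.mp hy
  rw [← hiter a y, ← hxy, hiter b]

theorem finite_grandOrbit_inter [MeasurableSingletonClass α] (hf : MeasurableEmbedding f)
    (hμ : MeasurePreserving f μ μ) (hx : μ {x} ≠ 0) (hA : μ A ≠ ⊤) :
    (grandOrbit f {x} ∩ A).Finite := by
  by_contra hinf
  refine hA (top_unique ?_)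
  rw [← Set.Infinite.meas_eq_top hinf
    ⟨μ {x}, hx, fun y hy => (measure_singleton_of_mem_grandOrbit hf hμ hy.1).ge⟩]
  exact measure_mono inter_subset_right

end Atoms

section Dissipative

variable {ι : Type}

theorem iterate_chaconT_iterate_chaconTinv {j : ℕ} {x : ChaconX} (hx : chaconTinv^[j] x ≠ ⊥) :
    chaconT^[j] (chaconTinv^[j] x) = x := by
  induction j with
  | zero => rfl
  | succ j ih =>
    rw [iterate_succ_apply'] at hx
    have hne : chaconTinv^[j] x ≠ ⊥ := fun h => hx (h ▸ chaconTinv_bot)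
    obtain ⟨z, hz⟩ := range_chaconT.ge hne
    rw [iterate_succ_apply' chaconTinv, iterate_succ_apply chaconT, ← hz, chaconTinv_chaconT, hz,
      ih hne]

theorem chaconTdZ_neg_natCast_iterate (j : ℕ) (x : ι → ChaconX) :
    chaconTdZ ι (-j) ((chaconTd ι)^[j] x) = x := by
  funext i
  rw [chaconTdZ, chaconTZ_neg_natCast, iterate_chaconTd, chaconTinv_chaconT.iterate j]

theorem iterate_chaconTdZ_neg_natCast {j : ℕ} {x : ι → ChaconX}
    (hx : ∀ i, chaconTdZ ι (-j) x i ≠ ⊥) : (chaconTd ι)^[j] (chaconTdZ ι (-j) x) = x := by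
  funext i
  have hi := hx i
  rw [chaconTdZ, chaconTZ_neg_natCast] at hi
  rw [iterate_chaconTd, chaconTdZ, chaconTZ_neg_natCast, iterate_chaconT_iterate_chaconTinv hi]

theorem iterate_chaconTd_left_injective [Nonempty ι] (x : ι → ChaconX) :
    Injective fun j : ℕ => (chaconTd ι)^[j] x := by
  obtain ⟨i⟩ := ‹Nonempty ι›
  intro j k hjk
  have hjk' : chaconT^[j] (x i) = chaconT^[k] (x i) := by
    simpa only [iterate_chaconTd] using congrFun hjk i
  have hle {j k : ℕ} (h : chaconT^[j] (x i) = chaconT^[k] (x i)) : j ≤ k := by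
    by_contra! hlt
    exact iterate_chaconT_ne_self (Nat.sub_pos_of_lt hlt) (x i)
      (iterate_cancel chaconT_injective h)
  exact (hle hjk').antisymm (hle hjk'.symm)

theorem infinite_grandOrbit_inter [Finite ι] [Nonempty ι] {x : ι → ChaconX}
    (hadj : x ∈ adjacentInfinitelyOften ι) (hx : ∀ i, x i ≠ ⊥) :
    ∃ n, (grandOrbit (chaconTd ι) {x} ∩ chaconCd ι n).Infinite := by
  obtain ⟨n, -, hinf | hinf⟩ := exists_infinite_visits hadj hx
  · refine ⟨n, infinite_of_injOn_mapsTo (iterate_chaconTd_left_injective x).injOn ?_ hinf⟩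
    exact fun j hj => ⟨mem_grandOrbit.mpr ⟨0, j, x, rfl, rfl⟩, hj⟩
  · choose! z hzC hz using fun j (hj : x ∈ (chaconTd ι)^[j] '' chaconCd ι n) => hj
    refine ⟨n, infinite_of_injOn_mapsTo (f := z) (fun j hj k hk hjk => ?_) (fun j hj => ?_) hinf⟩
    · exact iterate_chaconTd_left_injective (z j) ((hz j hj).trans (hjk ▸ (hz k hk).symm))
    · exact ⟨mem_grandOrbit.mpr ⟨j, 0, x, rfl, (hz j hj).symm⟩, hzC j hj⟩

theorem iUnion_image_chaconTdZ_subset (W : Set (ι → ChaconX)) :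
    ⋃ j : ℤ, chaconTdZ ι j '' W ⊆ grandOrbit (chaconTd ι) W ∪ {x | ∀ i, x i ≠ ⊥}ᶜ := by
  refine iUnion_subset fun j => ?_
  rintro _ ⟨w, hw, rfl⟩
  refine or_iff_not_imp_right.mpr fun hbot => mem_grandOrbit.mpr ?_
  obtain ⟨k, rfl | rfl⟩ := j.eq_nat_or_neg
  · exact ⟨0, k, w, hw, by rw [chaconTdZ_natCast]; rfl⟩
  · exact ⟨k, 0, w, hw, (iterate_chaconTdZ_neg_natCast (not_not.mp hbot)).symm⟩

theorem grandOrbit_singleton_subset_range_chaconTdZ (x : ι → ChaconX) :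
    grandOrbit (chaconTd ι) {x} ⊆ range fun j : ℤ => chaconTdZ ι j x := by
  intro y hy
  obtain ⟨a, b, w, hw, hxy⟩ := mem_grandOrbit.mp hy
  rw [mem_singleton_iff.mp hw] at hxy
  have hinj : Injective (chaconTd ι) := partialT_univ (ι := ι) ▸ partialT_injective univ
  obtain ⟨c, rfl⟩ | ⟨c, rfl⟩ := (le_total a b).imp le_iff_exists_add.mp le_iff_exists_add.mp
  · rw [iterate_add_apply] at hxy
    exact ⟨c, (congrFun (chaconTdZ_natCast ι c) x).trans (hinj.iterate a hxy)⟩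
  · rw [iterate_add_apply] at hxy
    exact ⟨-c, hinj.iterate b hxy ▸ chaconTdZ_neg_natCast_iterate c y⟩

theorem eq_of_iterate_chaconTd_eq_of_wandering {W : Set (ι → ChaconX)} [Countable ι]
    (hW : ZWandering (chaconTdZ ι) W) {x y : ι → ChaconX} (hx : x ∈ W) (hy : y ∈ W) {a b : ℕ}
    (hxy : (chaconTd ι)^[b] y = (chaconTd ι)^[a] x) : x = y := by
  by_cases hab : a = b
  · subst hab
    exact (measurableEmbedding_chaconTd.injective.iterate a hxy).symm
  · have hdisj := hW a b (Nat.cast_injective.ne hab)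
    rw [chaconTdZ_natCast, chaconTdZ_natCast] at hdisj
    exact absurd hxy.symm (disjoint_iff_forall_ne.mp hdisj ⟨x, hx, rfl⟩ ⟨y, hy, rfl⟩)

variable [Fintype ι] {σ : Measure (ι → ChaconX)}

theorem IsAdmissible.exists_atom (hσ : IsAdmissible σ)
    (hdis : ZTotallyDissipative σ (chaconTdZ ι)) : ∃ x, σ {x} ≠ 0 := by
  obtain ⟨W, hWm, hW, hcov⟩ := hdis
  refine exists_measure_singleton_ne_zero measurableEmbedding_chaconTd hσ.ergodic.toPreErgodic hWm
    (fun hW0 => hσ.ne_zero (Measure.measure_univ_eq_zero.mp ?_))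
    fun x hx y hy a b hxy => eq_of_iterate_chaconTd_eq_of_wandering hW hx hy hxy
  rw [← compl_union_self (⋃ j : ℤ, chaconTdZ ι j '' W)]
  refine measure_union_null hcov (measure_mono_null (iUnion_image_chaconTdZ_subset W) ?_)
  exact measure_union_null (measure_grandOrbit_eq_zero measurableEmbedding_chaconTd
    hσ.ergodic.toMeasurePreserving hW0) (ae_forall_ne_bot hσ.ergodic.toMeasurePreserving)

theorem IsAdmissible.measure_adjacentInfinitelyOften_eq_zero [Nonempty ι] (hσ : IsAdmissible σ)
    {x : ι → ChaconX} (hx : σ {x} ≠ 0) : σ (adjacentInfinitelyOften ι) = 0 := by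
  have hT := measurableEmbedding_chaconTd (ι := ι)
  have hinv := hσ.ergodic.toMeasurePreserving
  have horb : ∀ᵐ y ∂σ, y ∈ grandOrbit (chaconTd ι) {x} :=
    measure_compl_grandOrbit_singleton hT hσ.ergodic.toPreErgodic hx
  rw [measure_eq_zero_iff_ae_notMem]
  filter_upwards [ae_forall_ne_bot hinv, horb] with y hy hyx hadj
  obtain ⟨n, hinf⟩ := infinite_grandOrbit_inter hadj hy
  exact hinf (finite_grandOrbit_inter hT hinv
    (measure_singleton_of_mem_grandOrbit hT hinv hyx ▸ hx)
    (boundedlyFinite_iff.mp hσ.boundedlyFinite n).ne)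

theorem IsAdmissible.isDiagonalMeasure_of_totallyDissipative [Nonempty ι] (hσ : IsAdmissible σ)
    (hdis : ZTotallyDissipative σ (chaconTdZ ι)) :
    IsDiagonalMeasure ι σ ∧ ∃ x, σ (range fun j : ℤ => chaconTdZ ι j x)ᶜ = 0 := by
  obtain ⟨x, hx⟩ := hσ.exists_atom hdis
  refine ⟨isDiagonalMeasure_of_measure_adjacentInfinitelyOften_eq_zero hσ.ne_zero
    hσ.boundedlyFinite hσ.ergodic (hσ.measure_adjacentInfinitelyOften_eq_zero hx), x, ?_⟩
  exact measure_mono_null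
    (compl_subset_compl.mpr (grandOrbit_singleton_subset_range_chaconTdZ x))
    (measure_compl_grandOrbit_singleton measurableEmbedding_chaconTd hσ.ergodic.toPreErgodic hx)

end Dissipative

end Chacon

end

/-- **Theorem (structure of ergodic invariant measures).**
Let `d ≥ 1` and let `σ` be a nonzero, `T^{×d}`-invariant, boundedly finite measure on
`X^d` such that `(X^d, σ, T^{×d})` is ergodic.  Then there is a partition of `{1,…,d}`
into subsets `I₁, …, I_r` such that `σ = σ^{I₁} ⊗ ⋯ ⊗ σ^{I_r}`, where each `σ^{I_j}` is a
diagonal measure on `X^{I_j}`.  If moreover the system is totally dissipative, `σ` is a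
diagonal measure supported on a single `T^{×d}`-orbit. -/
theorem chacon_msj (d : ℕ) (hd : 1 ≤ d) (σ : Measure (Fin d → ChaconX)) (hσ : σ ≠ 0)
    (hbf : BoundedlyFinite σ) (hinv : σ.map (chaconTd (Fin d)) = σ)
    (herg : MeasErgodic σ (chaconTd (Fin d))) :
    (∃ (r : ℕ) (P : Fin d → Fin r)
        (σs : ∀ j : Fin r, Measure ({i : Fin d // P i = j} → ChaconX)),
      Function.Surjective P ∧
      (∀ j : Fin r, IsDiagonalMeasure {i : Fin d // P i = j} (σs j)) ∧
      ∀ A : Fin d → Set ChaconX, (∀ i, MeasurableSet (A i)) →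
        σ (Set.univ.pi A) = ∏ j : Fin r, σs j (Set.univ.pi fun i => A i.1)) ∧
    (ZTotallyDissipative σ (chaconTdZ (Fin d)) →
      IsDiagonalMeasure (Fin d) σ ∧
        ∃ x : Fin d → ChaconX,
          σ ((Set.range fun j : ℤ => chaconTdZ (Fin d) j x)ᶜ) = 0) := by
  have : Nonempty (Fin d) := ⟨⟨0, hd⟩⟩
  have hT : MeasurePreserving (chaconTd (Fin d)) σ σ :=
    ⟨Chacon.measurableEmbedding_chaconTd.measurable, hinv⟩
  have hadm : Chacon.IsAdmissible σ := ⟨hσ, hbf, Chacon.ergodic_of_measErgodic hT herg⟩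
  exact ⟨hadm.exists_diagonal_decomposition, hadm.isDiagonalMeasure_of_totallyDissipative⟩
end

section
/- The Lebesgue measure μ is, up to a multiplicative constant, the only T-invariant, boundedly finite measure on X: every T-invariant boundedly finite measure on X = ℝ₊ is equal to c·μ for some constant c ≥ 0. -/
open MeasureTheory Set
open scoped ENNReal NNReal Classical

/-!
The levels of tower `n` are exactly the triadic intervals `[j 3⁻ⁿ, (j + 1) 3⁻ⁿ)` with `j < hₙ`, in
some order. Since `hₙ 3⁻ⁿ → ∞`, every neighbourhood of a point contains a level around that point,
so the levels form a countable π-system generating the Borel sets. As `T` carries each level onto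
the next one, an invariant measure gives the same mass to all the levels of a tower, and cutting
towers into three shows that this mass is `3⁻ⁿ σ([0, 1))`. Hence `σ` and `σ([0, 1)) μ` agree on all
levels. If some nonempty open set has finite measure, so does a level inside it; then `σ([0, 1))` is
finite and the two measures are equal.
-/

section

open Filter Topology

theorem measurable_of_eqOn_countable_cover {ι α β : Type*} [Countable ι] [MeasurableSpace α]
    [MeasurableSpace β] {s : ι → Set α} {f : α → β} {g : ι → α → β}
    (hs : ∀ i, MeasurableSet (s i)) (hcover : ⋃ i, s i = univ) (hg : ∀ i, Measurable (g i))
    (hfg : ∀ i, EqOn f (g i) (s i)) : Measurable f := by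
  intro t ht
  rw [← univ_inter (f ⁻¹' t), ← hcover, iUnion_inter]
  refine .iUnion fun i ↦ ?_
  rw [(hfg i).inter_preimage_eq]
  exact (hs i).inter (hg i ht)

theorem chaconH_succ (n : ℕ) : chaconH (n + 1) = 6 * chaconH n + 2 := by
  rw [chaconH]; ring

theorem chaconH_pos : ∀ n, 0 < chaconH n
  | 0 => one_pos
  | n + 1 => by rw [chaconH_succ]; omega

theorem six_pow_le_chaconH (n : ℕ) : 6 ^ n ≤ chaconH n := by
  induction n with
  | zero => exact le_rfl
  | succ n ih => rw [chaconH_succ, pow_succ]; omega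

theorem tendsto_chaconH_mul_inv_pow :
    Tendsto (fun n : ℕ ↦ (chaconH n : ℝ) * (3 : ℝ)⁻¹ ^ n) atTop atTop := by
  refine tendsto_atTop_mono (fun n ↦ ?_) (tendsto_pow_atTop_atTop_of_one_lt one_lt_two)
  calc (2 : ℝ) ^ n = 6 ^ n * 3⁻¹ ^ n := by rw [← mul_pow]; norm_num
    _ ≤ chaconH n * 3⁻¹ ^ n := by gcongr; exact_mod_cast six_pow_le_chaconH n

/-! ### Levels of the towers -/

/-- The height at which the copy of tower `n` given by its subcolumn `i` starts in tower `n + 1`. -/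
def chaconShift (n : ℕ) : Fin 3 → ℕ := ![0, chaconH n, 2 * chaconH n + 1]

theorem chaconShift_injective (n : ℕ) : Function.Injective (chaconShift n) := by
  have := chaconH_pos n
  intro i j hij
  fin_cases i <;> fin_cases j <;> simp [chaconShift] at hij ⊢ <;> omega

theorem add_chaconShift_lt {n k : ℕ} (hk : k < chaconH n) (i : Fin 3) :
    k + chaconShift n i + 1 < chaconH (n + 1) := by
  rw [chaconH_succ]
  fin_cases i <;> simp [chaconShift] <;> omega

theorem chaconL_add_shift {n k : ℕ} (hk : k < chaconH n) (i : Fin 3) :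
    chaconL (n + 1) (k + chaconShift n i) = chaconL n k + i * (3 : ℝ)⁻¹ ^ (n + 1) := by
  fin_cases i
  · simp [chaconL, chaconShift, hk]
  · simp [chaconL, chaconShift, show k + chaconH n < 2 * chaconH n by omega]
  · have sub_shift : k + (2 * chaconH n + 1) - 2 * chaconH n - 1 = k := by omega
    simp [chaconL, chaconShift, sub_shift, show ¬ k + (2 * chaconH n + 1) < chaconH n by omega,
      show ¬ k + (2 * chaconH n + 1) < 2 * chaconH n by omega,
      show ¬ k + (2 * chaconH n + 1) = 2 * chaconH n by omega,
      show k + (2 * chaconH n + 1) ≤ 3 * chaconH n by omega]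

theorem exists_chaconL_eq {n j : ℕ} (hj : j < chaconH n) :
    ∃ k < chaconH n, chaconL n k = j * (3 : ℝ)⁻¹ ^ n := by
  induction n generalizing j with
  | zero => exact ⟨0, one_pos, by simp_all [chaconH, chaconL]⟩
  | succ n ih =>
    rw [chaconH_succ] at hj
    rcases lt_trichotomy j (3 * chaconH n) with old | rfl | spacer
    · obtain ⟨k, hk, hkj⟩ := ih (j := j / 3) (by omega)
      let i : Fin 3 := ⟨j % 3, Nat.mod_lt j three_pos⟩
      have div_mod : (j : ℝ) = 3 * (j / 3 : ℕ) + (j % 3 : ℕ) := by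
        exact_mod_cast (Nat.div_add_mod j 3).symm
      refine ⟨k + chaconShift n i, (Nat.lt_succ_self _).trans (add_chaconShift_lt hk i), ?_⟩
      rw [chaconL_add_shift hk, hkj, div_mod, pow_succ]
      ring
    · have := chaconH_pos n
      refine ⟨2 * chaconH n, by rw [chaconH_succ]; omega, ?_⟩
      rw [chaconL, if_neg (by omega), if_neg (by omega), if_pos rfl, pow_succ]
      push_cast; ring
    · refine ⟨j, by rwa [chaconH_succ], ?_⟩
      rw [chaconL, if_neg (by omega), if_neg (by omega), if_neg (by omega), if_neg (by omega),
        pow_succ]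
      ring

theorem natCast_mul_inv_pow_injective (n : ℕ) :
    Function.Injective fun j : ℕ ↦ (j : ℝ) * (3 : ℝ)⁻¹ ^ n :=
  (mul_left_injective₀ (by positivity)).comp Nat.cast_injective

theorem image_chaconL_range (n : ℕ) :
    (Finset.range (chaconH n)).image (chaconL n) =
      (Finset.range (chaconH n)).image fun j : ℕ ↦ (j : ℝ) * (3 : ℝ)⁻¹ ^ n := by
  refine (Finset.eq_of_subset_of_card_le (fun x hx ↦ ?_) ?_).symm
  · obtain ⟨j, hj, rfl⟩ := Finset.mem_image.1 hx
    obtain ⟨k, hk, hkj⟩ := exists_chaconL_eq (Finset.mem_range.1 hj)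
    exact Finset.mem_image.2 ⟨k, Finset.mem_range.2 hk, hkj⟩
  · rw [Finset.card_image_of_injective _ (natCast_mul_inv_pow_injective n)]
    exact Finset.card_image_le

theorem injOn_chaconL (n : ℕ) : InjOn (chaconL n) (Finset.range (chaconH n)) := by
  rw [← Finset.card_image_iff, image_chaconL_range]
  exact Finset.card_image_of_injective _ (natCast_mul_inv_pow_injective n)

theorem exists_eq_chaconL {n k : ℕ} (hk : k < chaconH n) :
    ∃ j : ℕ, chaconL n k = j * (3 : ℝ)⁻¹ ^ n := by
  have hL := Finset.mem_image_of_mem (chaconL n) (Finset.mem_range.2 hk)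
  rw [image_chaconL_range] at hL
  obtain ⟨j, -, hj⟩ := Finset.mem_image.1 hL
  exact ⟨j, hj.symm⟩

theorem chaconL_nonneg {n k : ℕ} (hk : k < chaconH n) : 0 ≤ chaconL n k := by
  obtain ⟨j, hj⟩ := exists_eq_chaconL hk
  rw [hj]; positivity

theorem eq_of_mem_chaconLevel {n k l : ℕ} {x : ℝ} (hk : k < chaconH n) (hl : l < chaconH n)
    (hxk : x ∈ chaconLevel n k) (hxl : x ∈ chaconLevel n l) : k = l := by
  obtain ⟨i, hi⟩ := exists_eq_chaconL hk
  obtain ⟨j, hj⟩ := exists_eq_chaconL hl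
  have key {a b : ℕ} (hab : a * (3 : ℝ)⁻¹ ^ n < b * (3 : ℝ)⁻¹ ^ n + (3 : ℝ)⁻¹ ^ n) : a ≤ b := by
    rw [← add_one_mul] at hab
    exact Nat.lt_succ_iff.1 (by exact_mod_cast lt_of_mul_lt_mul_right hab (by positivity))
  rw [chaconLevel, hi] at hxk
  rw [chaconLevel, hj] at hxl
  have hij : i = j := le_antisymm (key (hxk.1.trans_lt hxl.2)) (key (hxl.1.trans_lt hxk.2))
  exact injOn_chaconL n (by simpa) (by simpa) (by rw [hi, hj, hij])

theorem exists_mem_chaconLevel {n : ℕ} {x : ℝ} (hx₀ : 0 ≤ x)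
    (hx : x < chaconH n * (3 : ℝ)⁻¹ ^ n) : ∃ k < chaconH n, x ∈ chaconLevel n k := by
  have ht : (0 : ℝ) < (3 : ℝ)⁻¹ ^ n := by positivity
  have hq : 0 ≤ x / (3 : ℝ)⁻¹ ^ n := by positivity
  obtain ⟨k, hk, hkL⟩ := exists_chaconL_eq ((Nat.floor_lt hq).2 ((div_lt_iff₀ ht).2 hx))
  refine ⟨k, hk, ?_, ?_⟩
  · rw [hkL]
    exact (le_div_iff₀ ht).1 (Nat.floor_le hq)
  · rw [hkL, ← add_one_mul]
    exact (div_lt_iff₀ ht).1 (Nat.lt_floor_add_one _)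

theorem chaconLevel_eq_iUnion {n k : ℕ} (hk : k < chaconH n) :
    chaconLevel n k = ⋃ i, chaconLevel (n + 1) (k + chaconShift n i) := by
  have hpow : (3 : ℝ)⁻¹ ^ n = 3 * (3 : ℝ)⁻¹ ^ (n + 1) := by rw [pow_succ]; ring
  have ht : (0 : ℝ) < (3 : ℝ)⁻¹ ^ (n + 1) := by positivity
  ext x
  simp only [chaconLevel, chaconL_add_shift hk, hpow, mem_iUnion, mem_Ico]
  generalize (3 : ℝ)⁻¹ ^ (n + 1) = t at ht
  constructor
  · rintro ⟨hl, hr⟩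
    rcases lt_or_ge x (chaconL n k + t) with h₁ | h₁
    · exact ⟨0, by simpa using hl, by simpa using h₁⟩
    rcases lt_or_ge x (chaconL n k + 2 * t) with h₂ | h₂
    · exact ⟨1, by simpa using h₁, by norm_num; linarith⟩
    · exact ⟨2, by simpa using h₂, by norm_num; linarith⟩
  · rintro ⟨i, hl, hr⟩
    have hi : (i : ℝ) * t ≤ 2 * t := by gcongr; exact_mod_cast Nat.lt_succ_iff.1 i.isLt
    have : 0 ≤ (i : ℝ) * t := by positivity
    constructor <;> linarith

theorem exists_refined_chaconLevel {n m k : ℕ} {x : ℝ} (hnm : n ≤ m) (hk : k + 1 < chaconH n)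
    (hx : x ∈ chaconLevel n k) :
    ∃ l, l + 1 < chaconH m ∧ x ∈ chaconLevel m l ∧ chaconLevel m l ⊆ chaconLevel n k ∧
      chaconL m (l + 1) - chaconL m l = chaconL n (k + 1) - chaconL n k := by
  induction m, hnm using Nat.le_induction with
  | base => exact ⟨k, hk, hx, Subset.rfl, rfl⟩
  | succ m _ ih =>
    obtain ⟨l, hl, hxl, hsub, hdiff⟩ := ih
    have hl' : l < chaconH m := by omega
    have split := chaconLevel_eq_iUnion hl'
    obtain ⟨i, hxi⟩ := mem_iUnion.1 (split ▸ hxl)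
    refine ⟨_, add_chaconShift_lt hl' i, hxi, (split ▸ subset_iUnion _ i).trans hsub, ?_⟩
    rw [← hdiff, add_right_comm, chaconL_add_shift hl, chaconL_add_shift hl',
      add_sub_add_right_eq_sub]

theorem chaconL_succ_sub_eq {n m k l : ℕ} {x : ℝ} (hk : k + 1 < chaconH n)
    (hl : l + 1 < chaconH m) (hxk : x ∈ chaconLevel n k) (hxl : x ∈ chaconLevel m l) :
    chaconL n (k + 1) - chaconL n k = chaconL m (l + 1) - chaconL m l := by
  obtain ⟨i, hi, hxi, -, hik⟩ := exists_refined_chaconLevel (le_max_left n m) hk hxk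
  obtain ⟨j, hj, hxj, -, hjl⟩ := exists_refined_chaconLevel (le_max_right n m) hl hxl
  obtain rfl := eq_of_mem_chaconLevel (by omega) (by omega) hxi hxj
  rw [← hik, hjl]

/-- Level `k` of tower `n` as a subset of `X`. -/
def chaconLevelX (n k : ℕ) : Set ChaconX := Subtype.val ⁻¹' chaconLevel n k

/-- The non-top levels of all towers, as subsets of `X`. Top levels are left out because `T` is not
a translation on them. -/
def chaconLevels : Set (Set ChaconX) := {s | ∃ n k, k + 1 < chaconH n ∧ chaconLevelX n k = s}

theorem mem_chaconLevelX {n k : ℕ} {x : ChaconX} :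
    x ∈ chaconLevelX n k ↔ (x : ℝ) ∈ chaconLevel n k :=
  Iff.rfl

theorem measurableSet_chaconLevelX (n k : ℕ) : MeasurableSet (chaconLevelX n k) :=
  measurable_subtype_coe measurableSet_Ico

theorem countable_chaconLevels : chaconLevels.Countable := by
  refine (countable_range fun p : ℕ × ℕ ↦ chaconLevelX p.1 p.2).mono ?_
  rintro _ ⟨n, k, -, rfl⟩
  exact ⟨(n, k), rfl⟩

theorem isPiSystem_chaconLevels : IsPiSystem chaconLevels := by
  have inter_mem {n m k l : ℕ} (hnm : n ≤ m) (hk : k + 1 < chaconH n) (hl : l + 1 < chaconH m)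
      (hne : (chaconLevelX n k ∩ chaconLevelX m l).Nonempty) :
      chaconLevelX n k ∩ chaconLevelX m l ∈ chaconLevels := by
    obtain ⟨x, hxk, hxl⟩ := hne
    obtain ⟨l', hl', hxl', hsub, -⟩ := exists_refined_chaconLevel hnm hk hxk
    obtain rfl := eq_of_mem_chaconLevel (by omega) (by omega) hxl' hxl
    exact ⟨m, l', hl', (inter_eq_right.2 (preimage_mono hsub)).symm⟩
  rintro _ ⟨n, k, hk, rfl⟩ _ ⟨m, l, hl, rfl⟩ hne
  rcases le_total n m with hnm | hmn
  · exact inter_mem hnm hk hl hne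
  · rw [inter_comm] at hne ⊢
    exact inter_mem hmn hl hk hne

theorem exists_chaconLevelX_subset {x : ChaconX} {U : Set ChaconX} (hU : U ∈ 𝓝 x) :
    ∃ n k, k + 1 < chaconH n ∧ x ∈ chaconLevelX n k ∧ chaconLevelX n k ⊆ U := by
  obtain ⟨ε, hε, hball⟩ := Metric.mem_nhds_iff.1 hU
  have width_lt : ∀ᶠ n : ℕ in atTop, (3 : ℝ)⁻¹ ^ n < ε :=
    (tendsto_pow_atTop_nhds_zero_of_lt_one (by positivity) (by norm_num)).eventually_lt_const hε
  obtain ⟨n, hn, hxn⟩ :=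
    (width_lt.and (tendsto_chaconH_mul_inv_pow.eventually_gt_atTop (x : ℝ))).exists
  obtain ⟨k, hk, hx⟩ := exists_mem_chaconLevel x.2 hxn
  have split := chaconLevel_eq_iUnion hk
  obtain ⟨i, hxi⟩ := mem_iUnion.1 (split ▸ hx)
  refine ⟨n + 1, _, add_chaconShift_lt hk i, hxi, fun y hy ↦ hball ?_⟩
  have hyk : (y : ℝ) ∈ chaconLevel n k := split ▸ mem_iUnion.2 ⟨i, hy⟩
  rw [Metric.mem_ball, Subtype.dist_eq, Real.dist_eq, abs_sub_lt_iff]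
  constructor <;> linarith [hx.1, hx.2, hyk.1, hyk.2]

theorem exists_mem_chaconLevelX (x : ChaconX) :
    ∃ n k, k + 1 < chaconH n ∧ x ∈ chaconLevelX n k := by
  obtain ⟨n, k, hk, hx, -⟩ := exists_chaconLevelX_subset (x := x) univ_mem
  exact ⟨n, k, hk, hx⟩

theorem sUnion_chaconLevels : ⋃₀ chaconLevels = univ := by
  refine eq_univ_of_forall fun x ↦ ?_
  obtain ⟨n, k, hk, hx⟩ := exists_mem_chaconLevelX x
  exact ⟨_, ⟨n, k, hk, rfl⟩, hx⟩

theorem measurableSpace_eq_generateFrom_chaconLevels :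
    (inferInstance : MeasurableSpace ChaconX) = MeasurableSpace.generateFrom chaconLevels := by
  apply le_antisymm
  · rw [BorelSpace.measurable_eq (α := ChaconX)]
    refine MeasurableSpace.generateFrom_le fun U hU ↦ ?_
    have hU_eq : U = ⋃₀ {s ∈ chaconLevels | s ⊆ U} := by
      refine Subset.antisymm (fun x hx ↦ ?_) (sUnion_subset fun s hs ↦ hs.2)
      obtain ⟨n, k, hk, hxk, hkU⟩ := exists_chaconLevelX_subset (IsOpen.mem_nhds hU hx)
      exact ⟨_, ⟨⟨n, k, hk, rfl⟩, hkU⟩, hxk⟩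
    rw [hU_eq]
    exact .sUnion (countable_chaconLevels.mono (sep_subset _ _))
      fun s hs ↦ MeasurableSpace.measurableSet_generateFrom hs.1
  · refine MeasurableSpace.generateFrom_le ?_
    rintro _ ⟨n, k, -, rfl⟩
    exact measurableSet_chaconLevelX n k

theorem measure_ext_of_chaconLevels {σ τ : Measure ChaconX}
    (hfin : ∀ n k, k + 1 < chaconH n → σ (chaconLevelX n k) ≠ ⊤)
    (heq : ∀ n k, k + 1 < chaconH n → σ (chaconLevelX n k) = τ (chaconLevelX n k)) : σ = τ := by
  refine Measure.ext_of_generateFrom_of_cover_subset measurableSpace_eq_generateFrom_chaconLevels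
    isPiSystem_chaconLevels Subset.rfl countable_chaconLevels sUnion_chaconLevels ?_ ?_
  · rintro _ ⟨n, k, hk, rfl⟩
    exact hfin n k hk
  · rintro _ ⟨n, k, hk, rfl⟩
    exact heq n k hk

/-! ### The transformation -/

theorem chaconT0_eq {n k : ℕ} {x : ℝ} (hk : k + 1 < chaconH n) (hx : x ∈ chaconLevel n k) :
    chaconT0 x = x - chaconL n k + chaconL n (k + 1) := by
  have h : ∃ p : ℕ × ℕ, p.2 + 1 < chaconH p.1 ∧ x ∈ chaconLevel p.1 p.2 := ⟨(n, k), hk, hx⟩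
  rw [chaconT0, dif_pos h]
  linarith [chaconL_succ_sub_eq h.choose_spec.1 hk h.choose_spec.2 hx]

theorem coe_chaconT {n k : ℕ} {x : ChaconX} (hk : k + 1 < chaconH n) (hx : x ∈ chaconLevelX n k) :
    (chaconT x : ℝ) = x - chaconL n k + chaconL n (k + 1) := by
  have nonneg : 0 ≤ x - chaconL n k + chaconL n (k + 1) := by linarith [hx.1, chaconL_nonneg hk]
  change max 0 (chaconT0 x) = _
  rw [chaconT0_eq hk hx, max_eq_right nonneg]

theorem chaconT_mem_chaconLevelX {n k : ℕ} {x : ChaconX} (hk : k + 1 < chaconH n)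
    (hx : x ∈ chaconLevelX n k) : chaconT x ∈ chaconLevelX n (k + 1) := by
  rw [mem_chaconLevelX, coe_chaconT hk hx]
  constructor <;> linarith [hx.1, hx.2]

theorem chaconT_injective : Function.Injective chaconT := by
  intro x y hxy
  obtain ⟨n, k, hk, hx⟩ := exists_mem_chaconLevelX x
  obtain ⟨m, l, hl, hy⟩ := exists_mem_chaconLevelX y
  obtain ⟨i, hi, hxi, -⟩ := exists_refined_chaconLevel (le_max_left n m) hk hx
  obtain ⟨j, hj, hyj, -⟩ := exists_refined_chaconLevel (le_max_right n m) hl hy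
  have hij : i + 1 = j + 1 := eq_of_mem_chaconLevel hi hj (chaconT_mem_chaconLevelX hi hxi)
    (hxy ▸ chaconT_mem_chaconLevelX hj hyj)
  obtain rfl := Nat.succ_injective hij
  have hcoe := congrArg Subtype.val hxy
  rw [coe_chaconT hi hxi, coe_chaconT hi hyj] at hcoe
  exact Subtype.ext (by linarith)

theorem image_chaconT_chaconLevelX {n k : ℕ} (hk : k + 1 < chaconH n) :
    chaconT '' chaconLevelX n k = chaconLevelX n (k + 1) := by
  refine Subset.antisymm (image_subset_iff.2 fun x ↦ chaconT_mem_chaconLevelX hk) fun y hy ↦ ?_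
  have hL : 0 ≤ chaconL n k := chaconL_nonneg (by omega)
  let x : ChaconX := ⟨y - chaconL n (k + 1) + chaconL n k, mem_Ici.2 (by linarith [hy.1])⟩
  have hx : x ∈ chaconLevelX n k := by constructor <;> dsimp only [x] <;> linarith [hy.1, hy.2]
  refine ⟨x, hx, Subtype.ext ?_⟩
  rw [coe_chaconT hk hx]
  dsimp only [x]; ring

theorem preimage_chaconT_chaconLevelX {n k : ℕ} (hk : k + 1 < chaconH n) :
    chaconT ⁻¹' chaconLevelX n (k + 1) = chaconLevelX n k := by
  rw [← image_chaconT_chaconLevelX hk, preimage_image_eq _ chaconT_injective]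

theorem measurable_chaconT : Measurable chaconT := by
  rw [← (MeasurableEmbedding.subtype_coe measurableSet_Ici).measurable_comp_iff]
  refine measurable_of_eqOn_countable_cover
    (s := fun p : {p : ℕ × ℕ // p.2 + 1 < chaconH p.1} ↦ chaconLevelX p.1.1 p.1.2)
    (g := fun p x ↦ x - chaconL p.1.1 p.1.2 + chaconL p.1.1 (p.1.2 + 1))
    (fun p ↦ measurableSet_chaconLevelX _ _) ?_ (fun p ↦ by fun_prop)
    fun p x hx ↦ coe_chaconT p.2 hx
  refine iUnion_eq_univ_iff.2 fun x ↦ ?_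
  obtain ⟨n, k, hk, hx⟩ := exists_mem_chaconLevelX x
  exact ⟨⟨(n, k), hk⟩, hx⟩

/-! ### Measures of the levels -/

theorem chaconMu_chaconLevelX {n k : ℕ} (hk : k < chaconH n) :
    chaconMu (chaconLevelX n k) = ENNReal.ofReal ((3 : ℝ)⁻¹ ^ n) := by
  have level_subset : chaconLevel n k ⊆ Ici 0 := fun x hx ↦ (chaconL_nonneg hk).trans hx.1
  rw [chaconMu, comap_subtype_coe_apply measurableSet_Ici, chaconLevelX,
    Subtype.image_preimage_coe, inter_eq_right.2 level_subset, chaconLevel, Real.volume_Ico,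
    add_sub_cancel_left]

section Invariant

variable {σ : Measure ChaconX} (hσ : MeasurePreserving chaconT σ σ)
include hσ

theorem measure_chaconLevelX_eq_bottom {n k : ℕ} (hk : k < chaconH n) :
    σ (chaconLevelX n k) = σ (chaconLevelX n 0) := by
  induction k with
  | zero => rfl
  | succ k ih =>
    rw [← ih (by omega), ← preimage_chaconT_chaconLevelX hk,
      hσ.measure_preimage (measurableSet_chaconLevelX _ _).nullMeasurableSet]

theorem measure_chaconLevelX_eq_three_mul {n k : ℕ} (hk : k < chaconH n) :
    σ (chaconLevelX n k) = 3 * σ (chaconLevelX (n + 1) 0) := by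
  have shift_lt (i : Fin 3) : k + chaconShift n i < chaconH (n + 1) :=
    (Nat.lt_succ_self _).trans (add_chaconShift_lt hk i)
  have pieces_disjoint :
      Pairwise (Function.onFun Disjoint fun i ↦ chaconLevelX (n + 1) (k + chaconShift n i)) :=
    fun i j hij ↦ disjoint_left.2 fun x hxi hxj ↦ hij <| chaconShift_injective n <|
      Nat.add_left_cancel (eq_of_mem_chaconLevel (shift_lt i) (shift_lt j) hxi hxj)
  calc σ (chaconLevelX n k)
      = σ (⋃ i, chaconLevelX (n + 1) (k + chaconShift n i)) := by
        simp only [chaconLevelX, chaconLevel_eq_iUnion hk, preimage_iUnion]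
    _ = ∑ i, σ (chaconLevelX (n + 1) (k + chaconShift n i)) := by
        rw [measure_iUnion pieces_disjoint fun i ↦ measurableSet_chaconLevelX _ _, tsum_fintype]
    _ = 3 * σ (chaconLevelX (n + 1) 0) := by
        simp [measure_chaconLevelX_eq_bottom hσ (shift_lt _)]

theorem three_pow_mul_measure_chaconLevelX {n k : ℕ} (hk : k < chaconH n) :
    3 ^ n * σ (chaconLevelX n k) = σ (chaconLevelX 0 0) := by
  rw [measure_chaconLevelX_eq_bottom hσ hk]
  clear hk
  induction n with
  | zero => simp
  | succ n ih =>
    rw [← ih, measure_chaconLevelX_eq_three_mul hσ (chaconH_pos n), pow_succ, mul_assoc]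

theorem measure_chaconLevelX {n k : ℕ} (hk : k < chaconH n) :
    σ (chaconLevelX n k) = σ (chaconLevelX 0 0) * chaconMu (chaconLevelX n k) := by
  have three_pow_mul_mu : (3 : ℝ≥0∞) ^ n * chaconMu (chaconLevelX n k) = 1 := by
    rw [chaconMu_chaconLevelX hk, ENNReal.ofReal_pow (by positivity),
      ENNReal.ofReal_inv_of_pos three_pos, ENNReal.ofReal_ofNat, ← mul_pow,
      ENNReal.mul_inv_cancel (by simp) (by simp), one_pow]
  rw [← three_pow_mul_measure_chaconLevelX hσ hk, mul_right_comm, three_pow_mul_mu, one_mul]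

theorem measure_chaconLevelX_zero_ne_top {U : Set ChaconX} (hU : IsOpen U) (hne : U.Nonempty)
    (hfin : σ U ≠ ⊤) : σ (chaconLevelX 0 0) ≠ ⊤ := by
  obtain ⟨x, hx⟩ := hne
  obtain ⟨n, k, hk, -, hkU⟩ := exists_chaconLevelX_subset (hU.mem_nhds hx)
  rw [← three_pow_mul_measure_chaconLevelX hσ (n := n) (k := k) (by omega)]
  exact ENNReal.mul_ne_top (by finiteness) (measure_ne_top_of_subset hkU hfin)

end Invariant

theorem chacon_unique_invariant_measure_general (σ : Measure ChaconX) {U : Set ChaconX}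
    (hU : IsOpen U) (hne : U.Nonempty) (hfin : σ U ≠ ⊤) (hinv : σ.map chaconT = σ) :
    ∃ c : ℝ≥0, σ = c • chaconMu := by
  have hσ : MeasurePreserving chaconT σ σ := ⟨measurable_chaconT, hinv⟩
  have hfin₀ : σ (chaconLevelX 0 0) ≠ ⊤ := measure_chaconLevelX_zero_ne_top hσ hU hne hfin
  lift σ (chaconLevelX 0 0) to ℝ≥0 using hfin₀ with c hc
  have level_eq {n k : ℕ} (hk : k + 1 < chaconH n) :
      σ (chaconLevelX n k) = c * chaconMu (chaconLevelX n k) := by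
    rw [hc, measure_chaconLevelX hσ (by omega)]
  refine ⟨c, measure_ext_of_chaconLevels (fun n k hk ↦ ?_) fun n k hk ↦ level_eq hk⟩
  rw [level_eq hk, chaconMu_chaconLevelX (by omega)]
  finiteness

end

/-- **Proposition.**  The Lebesgue measure `μ` is, up to a multiplicative constant, the
only `T`-invariant boundedly finite measure on `X = ℝ₊`. -/
theorem chacon_unique_invariant_measure (σ : Measure ChaconX)
    (hbf : BoundedlyFinite σ) (hinv : σ.map chaconT = σ) :
    ∃ c : ℝ≥0, σ = c • chaconMu :=
  chacon_unique_invariant_measure_general σ Metric.isOpen_ball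
    ⟨⟨0, self_mem_Ici⟩, Metric.mem_ball_self one_pos⟩
    (hbf _ measurableSet_ball Metric.isBounded_ball).ne hinv
end
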